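/- arXiv:math/0508153 — 5 statements merged into one kernel-verified Lean document; each statement's English description precedes it below -/
import Mathlib

section
/- For every integer n ≥ 2, |R(w_0^B)| = (n² − 2)(n² − 3) · |R(w′)|. -/
/-- The generator `sᵢ` of the hyperoctahedral group `Bₙ`, realized as a permutation of `ℤ`:
`s₀` swaps `1` and `-1`; for `i ≥ 1`, `sᵢ` swaps `i` with `i+1` and `-i` with `-(i+1)`,
fixing all other integers. -/
def sB (i : ℕ) : Equiv.Perm ℤ :=
  if i = 0 then Equiv.swap 1 (-1)
  else Equiv.swap (i : ℤ) ((i : ℤ) + 1) * Equiv.swap (-(i : ℤ)) (-((i : ℤ) + 1))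

/-- The product `s_{i₁} ⋯ s_{i_ℓ}` corresponding to the word `i₁ ⋯ i_ℓ`. -/
def wordProd (l : List ℕ) : Equiv.Perm ℤ := (l.map sB).prod

/-- The underlying function of the longest element `w₀ᴮ ∈ Bₙ`: `i ↦ -i` on `{-n, …, n}`,
fixing all other integers. -/
def w0BFun (n : ℕ) : ℤ → ℤ := fun i => if -(n : ℤ) ≤ i ∧ i ≤ (n : ℤ) then -i else i

lemma w0BFun_involutive (n : ℕ) : Function.Involutive (w0BFun n) := by
  intro i
  unfold w0BFun
  split_ifs <;> omega

/-- The longest element `w₀ᴮ ∈ Bₙ`, as a permutation of `ℤ`. -/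
def w0B (n : ℕ) : Equiv.Perm ℤ := (w0BFun_involutive n).toPerm

/-- `l` is a reduced decomposition of `w` in `Bₙ`: a word over the alphabet `{0, …, n-1}`
whose product of generators is `w`, of minimal length among all such words. -/
def IsReducedWord (n : ℕ) (w : Equiv.Perm ℤ) (l : List ℕ) : Prop :=
  (∀ i ∈ l, i < n) ∧ wordProd l = w ∧
    ∀ l' : List ℕ, (∀ i ∈ l', i < n) → wordProd l' = w → l.length ≤ l'.length

/-- `R(w)`, the set of reduced decompositions of `w` in `Bₙ`. -/
def RSet (n : ℕ) (w : Equiv.Perm ℤ) : Set (List ℕ) := {l | IsReducedWord n w l}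

/-- The length `ℓ(w)` of `w ∈ Bₙ`: the minimal length of a word over `{0, …, n-1}`
whose product of generators is `w`. -/
noncomputable def lenB (n : ℕ) (w : Equiv.Perm ℤ) : ℕ :=
  sInf {m : ℕ | ∃ l : List ℕ, (∀ i ∈ l, i < n) ∧ wordProd l = w ∧ l.length = m}

/-- Whether a word begins with `k (k+1) k` or `(k+1) k (k+1)` for some `k ≥ 1`. -/
def isYB : List ℕ → Bool
  | a :: b :: c :: _ => (a != 0 && b == a + 1 && c == a) || (b != 0 && a == b + 1 && c == b + 1)
  | _ => false

/-- The number of Yang–Baxter moves in a word. -/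
def ybCount (l : List ℕ) : ℕ :=
  ((Finset.range l.length).filter fun j => isYB (l.drop j) = true).card

/-- Whether a word begins with `0101` or `1010`. -/
def is01 : List ℕ → Bool
  | a :: b :: c :: d :: _ =>
      (a == 0 && b == 1 && c == 0 && d == 1) || (a == 1 && b == 0 && c == 1 && d == 0)
  | _ => false

/-- The number of 01 moves in a word. -/
def m01Count (l : List ℕ) : ℕ :=
  ((Finset.range l.length).filter fun j => is01 (l.drop j) = true).card

/-- The underlying function of `w_k ∈ Bₙ`: `k ↦ -(k+2)`, `k+2 ↦ -k`, and `i ↦ -i` for all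
other `i ∈ {1, …, n}`, extended by `w(-i) = -w(i)` and fixing all integers outside
`{-n, …, -1, 1, …, n}`. -/
def wkFun (n k : ℕ) : ℤ → ℤ := fun i =>
  if -(n : ℤ) ≤ i ∧ i ≤ (n : ℤ) then
    if i = (k : ℤ) then -((k : ℤ) + 2)
    else if i = (k : ℤ) + 2 then -(k : ℤ)
    else if i = -(k : ℤ) then (k : ℤ) + 2
    else if i = -((k : ℤ) + 2) then (k : ℤ)
    else -i
  else i

/-- The underlying function of `w' ∈ Bₙ`: `1 ↦ 1`, `2 ↦ 2`, and `i ↦ -i` for `3 ≤ i ≤ n`,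
extended by `w(-i) = -w(i)` and fixing all integers outside `{-n, …, -1, 1, …, n}`. -/
def wpFun (n : ℕ) : ℤ → ℤ := fun i =>
  if (-(n : ℤ) ≤ i ∧ i ≤ (n : ℤ)) ∧ (i < -2 ∨ 2 < i) then -i else i

/-- `w`, viewed as a signed permutation of `{1, …, n}` via the values `w(1), …, w(n)`,
contains the signed pattern `p` (given by its list of values `p(1), …, p(m)`). -/
def ContainsPattern (n : ℕ) (w : ℤ → ℤ) (p : List ℤ) : Prop :=
  ∃ j : Fin p.length → ℤ, StrictMono j ∧ (∀ r, 1 ≤ j r ∧ j r ≤ (n : ℤ)) ∧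
    (∀ r s, w (j r) < w (j s) ↔ p.get r < p.get s) ∧
    (∀ r, w (j r) < 0 ↔ p.get r < 0)


/-- signed transposition -/
def rfB (x y : ℤ) : Equiv.Perm ℤ :=
  if x = -y then Equiv.swap x y else Equiv.swap x y * Equiv.swap (-x) (-y)

/-- coefficient of a coordinate along a root -/
def kk (x y b : ℤ) : ℤ := if b = y ∨ b = -x then 1 else if b = x ∨ b = -y then -1 else 0

lemma rfB_apply {x y : ℤ} (hx : x ≠ 0) (hy : y ≠ 0) (hxy : x ≠ y) (b : ℤ) :
    rfB x y b = if b = x then y else if b = y then x else if b = -x then -y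
      else if b = -y then -x else b := by
  unfold rfB
  split_ifs <;> simp only [Equiv.Perm.mul_apply, Equiv.swap_apply_def] <;> split_ifs <;> omega

lemma rfB_kk {x y : ℤ} (hx : x ≠ 0) (hy : y ≠ 0) (hxy : x ≠ y) (f : ℤ → ℤ)
    (hf : ∀ a, f (-a) = -f a) (b : ℤ) :
    f (rfB x y b) = f b - kk x y b * (f y - f x) := by
  rw [rfB_apply hx hy hxy]
  unfold kk
  by_cases h1 : b = x
  · subst h1
    by_cases h2 : b = -y
    · subst h2; have := hf y; simp; omega
    · have : ¬ (b = y ∨ b = -b) := by omega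
      simp [this]
  by_cases h2 : b = y
  · subst h2; simp [h1]
  by_cases h3 : b = -x
  · subst h3; have := hf x; have := hf y; simp [h1, h2]; omega
  by_cases h4 : b = -y
  · subst h4; have := hf x; have := hf y; simp [h1, h2, h3]; omega
  simp [h1, h2, h3, h4]

/-- signed permutations of `[-m, m]` -/
structure SgB (m : ℕ) (w : Equiv.Perm ℤ) : Prop where
  odd : ∀ a, w (-a) = -w a
  fix : ∀ a : ℤ, (m : ℤ) < |a| → w a = a

namespace SgB

variable {m : ℕ} {w v : Equiv.Perm ℤ}

lemma zero (h : SgB m w) : w 0 = 0 := by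
  have := h.odd 0
  simp at this; omega

lemma inv (h : SgB m w) : SgB m w⁻¹ where
  odd a := by
    apply w.injective; rw [h.odd]; simp
  fix a ha := by
    apply w.injective; rw [h.fix a ha]; simp

lemma mul (h : SgB m w) (h' : SgB m v) : SgB m (w * v) where
  odd a := by simp [h.odd, h'.odd]
  fix a ha := by simp [h.fix a ha, h'.fix a ha]

lemma ne_zero (h : SgB m w) {a : ℤ} (ha : a ≠ 0) : w a ≠ 0 := by
  intro h0
  apply ha; apply w.injective; rw [h0, h.zero]

lemma abs_le (h : SgB m w) {a : ℤ} (ha : |a| ≤ m) : |w a| ≤ m := by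
  by_contra hc
  push Not at hc
  have := w.injective (h.fix _ hc)
  rw [this] at hc; omega

end SgB

lemma one_SgB (m : ℕ) : SgB m 1 := ⟨by simp, by simp⟩

lemma rfB_SgB {m : ℕ} {x y : ℤ} (hx : x ≠ 0) (hy : y ≠ 0) (hxy : x ≠ y) (hxm : |x| ≤ m)
    (hym : |y| ≤ m) : SgB m (rfB x y) where
  odd a := by
    rw [rfB_apply hx hy hxy, rfB_apply hx hy hxy]; split_ifs <;> omega
  fix a ha := by
    rw [rfB_apply hx hy hxy]
    have h1 : a ≠ x := by rintro rfl; omega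
    have h2 : a ≠ y := by rintro rfl; omega
    have h3 : a ≠ -x := by rintro rfl; rw [abs_neg] at ha; omega
    have h4 : a ≠ -y := by rintro rfl; rw [abs_neg] at ha; omega
    simp [h1, h2, h3, h4]

lemma rfB_symm {x y : ℤ} (hx : x ≠ 0) (hy : y ≠ 0) (hxy : x ≠ y) : rfB y x = rfB x y := by
  ext b
  rw [rfB_apply hx hy hxy, rfB_apply hy hx hxy.symm]; split_ifs <;> omega

lemma rfB_neg {x y : ℤ} (hx : x ≠ 0) (hy : y ≠ 0) (hxy : x ≠ y) : rfB (-y) (-x) = rfB x y := by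
  ext b
  rw [rfB_apply hx hy hxy, rfB_apply (by omega) (by omega) (by omega)]; split_ifs <;> omega

lemma rfB_invol {x y : ℤ} (hx : x ≠ 0) (hy : y ≠ 0) (hxy : x ≠ y) (b : ℤ) :
    rfB x y (rfB x y b) = b := by
  simp only [rfB_apply hx hy hxy]; split_ifs <;> omega

lemma rfB_mul_self {x y : ℤ} (hx : x ≠ 0) (hy : y ≠ 0) (hxy : x ≠ y) :
    rfB x y * rfB x y = 1 := by
  ext b; simp [rfB_invol hx hy hxy]

lemma rfB_left {x y : ℤ} (hx : x ≠ 0) (hy : y ≠ 0) (hxy : x ≠ y) : rfB x y x = y := by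
  rw [rfB_apply hx hy hxy]; simp

lemma rfB_right {x y : ℤ} (hx : x ≠ 0) (hy : y ≠ 0) (hxy : x ≠ y) : rfB x y y = x := by
  rw [rfB_apply hx hy hxy]; simp [hxy.symm]

lemma SgB.conj {m : ℕ} {w : Equiv.Perm ℤ} (h : SgB m w) {x y : ℤ} (hx : x ≠ 0) (hy : y ≠ 0)
    (hxy : x ≠ y) : w * rfB x y = rfB (w x) (w y) * w := by
  ext b
  have h1 : w x ≠ w y := fun h => hxy (w.injective h)
  simp only [Equiv.Perm.mul_apply, rfB_apply hx hy hxy,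
    rfB_apply (h.ne_zero hx) (h.ne_zero hy) h1, ← h.odd, EmbeddingLike.apply_eq_iff_eq]
  split_ifs <;> rfl

/-- lower end of the simple root -/
def pB (i : ℕ) : ℤ := if i = 0 then -1 else i

/-- upper end of the simple root -/
def qB (i : ℕ) : ℤ := (i : ℤ) + 1

lemma pB_ne (i : ℕ) : pB i ≠ 0 := by unfold pB; split_ifs <;> omega
lemma qB_ne (i : ℕ) : qB i ≠ 0 := by unfold qB; omega
lemma pB_lt_qB (i : ℕ) : pB i < qB i := by unfold pB qB; split_ifs <;> omega
lemma pB_ne_qB (i : ℕ) : pB i ≠ qB i := (pB_lt_qB i).ne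

lemma sB_eq (i : ℕ) : sB i = rfB (pB i) (qB i) := by
  unfold sB rfB pB qB
  by_cases h : i = 0
  · subst h; simp [Equiv.swap_comm]
  · have : (i : ℤ) ≠ -((i : ℤ) + 1) := by omega
    simp only [h, if_false, this]

lemma sB_mul_self (i : ℕ) : sB i * sB i = 1 := by
  rw [sB_eq]; exact rfB_mul_self (pB_ne i) (qB_ne i) (pB_ne_qB i)

lemma sB_mul_mul (i : ℕ) (w : Equiv.Perm ℤ) : sB i * (sB i * w) = w := by
  rw [← mul_assoc, sB_mul_self, one_mul]

lemma sB_SgB {m i : ℕ} (hi : i < m) : SgB m (sB i) := by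
  rw [sB_eq]
  apply rfB_SgB (pB_ne i) (qB_ne i) (pB_ne_qB i)
  · unfold pB; split_ifs
    · simp; omega
    · rw [abs_of_nonneg] <;> omega
  · unfold qB; rw [abs_of_nonneg] <;> omega

lemma sB_flip {i : ℕ} {a b : ℤ} (ha : a ≠ 0) (hb : b ≠ 0) (hab : a < b)
    (h : sB i b < sB i a) : (a = pB i ∧ b = qB i) ∨ (a = -qB i ∧ b = -pB i) := by
  rw [sB_eq, rfB_apply (pB_ne i) (qB_ne i) (pB_ne_qB i),
    rfB_apply (pB_ne i) (qB_ne i) (pB_ne_qB i)] at h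
  unfold pB qB at *
  split_ifs at h <;> split_ifs <;> omega

lemma sB_flip_eq {i : ℕ} {a b : ℤ} (ha : a ≠ 0) (hb : b ≠ 0) (hab : a < b)
    (h : sB i b < sB i a) : sB i = rfB a b := by
  rcases sB_flip ha hb hab h with ⟨rfl, rfl⟩ | ⟨rfl, rfl⟩
  · exact sB_eq i
  · rw [rfB_neg (pB_ne i) (qB_ne i) (pB_ne_qB i)]; exact sB_eq i

/-- index set of pairs -/
noncomputable def PB (m : ℕ) : Finset (ℤ × ℤ) :=
  ((Finset.Icc (-(m : ℤ)) m).erase 0) ×ˢ ((Finset.Icc (-(m : ℤ)) m).erase 0)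

lemma mem_PB {m : ℕ} {d : ℤ × ℤ} :
    d ∈ PB m ↔ (d.1 ≠ 0 ∧ |d.1| ≤ m) ∧ (d.2 ≠ 0 ∧ |d.2| ≤ m) := by
  simp [PB, abs_le]

/-- weight of a pair -/
def wtB (d : ℤ × ℤ) : ℕ := if d.1 = -d.2 then 2 else 1

/-- twice the length -/
noncomputable def len2 (m : ℕ) (w : Equiv.Perm ℤ) : ℕ :=
  ∑ d ∈ PB m, if d.1 < d.2 ∧ w d.2 < w d.1 then wtB d else 0

/-- pairs which become inversions -/
noncomputable def EB (m : ℕ) (w t : Equiv.Perm ℤ) : Finset (ℤ × ℤ) :=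
  (PB m).filter fun d => d.1 < d.2 ∧ t d.2 < t d.1 ∧ w d.1 < w d.2 ∧ w (t d.2) < w (t d.1)

lemma len2_mul {m : ℕ} {w : Equiv.Perm ℤ} (h : SgB m w) {x y : ℤ} (hx : x ≠ 0) (hy : y ≠ 0)
    (hxy : x < y) (hxm : |x| ≤ m) (hym : |y| ≤ m) (hw : w x < w y) :
    len2 m (w * rfB x y) = len2 m w + ∑ d ∈ EB m w (rfB x y), wtB d := by
  set t := rfB x y with ht
  have hinv : ∀ b, t (t b) = b := rfB_invol hx hy hxy.ne
  have htS : SgB m t := rfB_SgB hx hy hxy.ne hxm hym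
  have key : ∀ d : ℤ × ℤ, d.1 < d.2 → t d.2 < t d.1 → w d.2 < w d.1 → w (t d.2) < w (t d.1) := by
    intro d h1 h2 h3
    have e1 := rfB_kk hx hy hxy.ne w h.odd d.1
    have e2 := rfB_kk hx hy hxy.ne w h.odd d.2
    have f1 := rfB_kk hx hy hxy.ne id (by simp) d.1
    have f2 := rfB_kk hx hy hxy.ne id (by simp) d.2
    simp only [id] at f1 f2
    rw [← ht] at e1 e2 f1 f2
    have hc : 0 < kk x y d.2 - kk x y d.1 := by
      by_contra hc
      push Not at hc
      nlinarith
    rw [e1, e2]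
    nlinarith
  have A : ∀ u : Equiv.Perm ℤ, len2 m u =
      (∑ d ∈ PB m, if d.1 < d.2 ∧ t d.1 < t d.2 ∧ u d.2 < u d.1 then wtB d else 0) +
      ∑ d ∈ PB m, if d.1 < d.2 ∧ t d.2 < t d.1 ∧ u d.2 < u d.1 then wtB d else 0 := by
    intro u
    rw [len2, ← Finset.sum_add_distrib]
    apply Finset.sum_congr rfl
    intro d _
    have : d.1 < d.2 → t d.1 ≠ t d.2 := fun h e => h.ne (t.injective e)
    by_cases h1 : d.1 < d.2
    · rcases lt_or_gt_of_ne (this h1) with h2 | h2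
      · simp [h1, h2, h2.not_gt]
      · simp [h1, h2, h2.not_gt]
    · simp [h1]
  rw [A (w * t), A w, EB, Finset.sum_filter, add_assoc]
  congr 1
  · apply Finset.sum_nbij' (fun d => (t d.1, t d.2)) (fun d => (t d.1, t d.2))
    · intro d hd
      rw [mem_PB] at *
      exact ⟨⟨htS.ne_zero hd.1.1, htS.abs_le hd.1.2⟩, ⟨htS.ne_zero hd.2.1, htS.abs_le hd.2.2⟩⟩
    · intro d hd
      rw [mem_PB] at *
      exact ⟨⟨htS.ne_zero hd.1.1, htS.abs_le hd.1.2⟩, ⟨htS.ne_zero hd.2.1, htS.abs_le hd.2.2⟩⟩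
    · intro d _; simp [hinv]
    · intro d _; simp [hinv]
    · intro d _
      have : wtB (t d.1, t d.2) = wtB d := by
        unfold wtB
        simp only [← htS.odd, EmbeddingLike.apply_eq_iff_eq]
      simp only [this, hinv, Equiv.Perm.mul_apply]
      congr 1
      exact propext ⟨fun ⟨a, b, c⟩ => ⟨b, a, c⟩, fun ⟨a, b, c⟩ => ⟨b, a, c⟩⟩
  · rw [← Finset.sum_add_distrib]
    apply Finset.sum_congr rfl
    intro d hd
    have k := key d
    have hne : d.1 < d.2 → w d.1 ≠ w d.2 := fun h e => h.ne (w.injective e)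
    simp only [Equiv.Perm.mul_apply]
    by_cases h1 : d.1 < d.2
    · by_cases h2 : t d.2 < t d.1
      · rcases lt_or_gt_of_ne (hne h1) with h3 | h3
        · simp [h1, h2, h3, h3.not_gt]
        · simp [h1, h2, h3, h3.not_gt, k h1 h2 h3]
      · simp [h2]
    · simp [h1]

lemma mem_EB {m : ℕ} {w : Equiv.Perm ℤ} {x y : ℤ} (hx : x ≠ 0) (hy : y ≠ 0)
    (hxy : x < y) (hxm : |x| ≤ m) (hym : |y| ≤ m) (hw : w x < w y) :
    (x, y) ∈ EB m w (rfB x y) := by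
  rw [EB, Finset.mem_filter, mem_PB]
  simp only [rfB_left hx hy hxy.ne, rfB_right hx hy hxy.ne]
  tauto

lemma mem_EB_neg {m : ℕ} {w : Equiv.Perm ℤ} (h : SgB m w) {x y : ℤ} (hx : x ≠ 0) (hy : y ≠ 0)
    (hxy : x < y) (hxm : |x| ≤ m) (hym : |y| ≤ m) (hw : w x < w y) :
    (-y, -x) ∈ EB m w (rfB x y) := by
  have := mem_EB (m := m) (w := w) (x := -y) (y := -x) (by omega) (by omega) (by omega)
    (by rwa [abs_neg]) (by rwa [abs_neg]) (by rw [h.odd, h.odd]; omega)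
  rwa [rfB_neg hx hy hxy.ne] at this

lemma sum_pair_wt {x y : ℤ} : ∑ d ∈ ({(x, y), (-y, -x)} : Finset (ℤ × ℤ)), wtB d = 2 := by
  by_cases h : x = -y
  · subst h; simp [wtB]
  · rw [Finset.sum_pair (by simp [h])]
    have : -y ≠ x := fun e => h e.symm
    simp [wtB, h, this]

lemma pair_sub_EB {m : ℕ} {w : Equiv.Perm ℤ} (h : SgB m w) {x y : ℤ} (hx : x ≠ 0) (hy : y ≠ 0)
    (hxy : x < y) (hxm : |x| ≤ m) (hym : |y| ≤ m) (hw : w x < w y) :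
    ({(x, y), (-y, -x)} : Finset (ℤ × ℤ)) ⊆ EB m w (rfB x y) := by
  intro d hd
  simp only [Finset.mem_insert, Finset.mem_singleton] at hd
  rcases hd with rfl | rfl
  · exact mem_EB hx hy hxy hxm hym hw
  · exact mem_EB_neg h hx hy hxy hxm hym hw

lemma len2_up {m : ℕ} {w : Equiv.Perm ℤ} (h : SgB m w) {x y : ℤ} (hx : x ≠ 0) (hy : y ≠ 0)
    (hxy : x < y) (hxm : |x| ≤ m) (hym : |y| ≤ m) (hw : w x < w y) :
    len2 m w + 2 ≤ len2 m (w * rfB x y) := by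
  rw [len2_mul h hx hy hxy hxm hym hw, ← sum_pair_wt (x := x) (y := y)]
  gcongr
  exact pair_sub_EB h hx hy hxy hxm hym hw

lemma len2_down {m : ℕ} {w : Equiv.Perm ℤ} (h : SgB m w) {x y : ℤ} (hx : x ≠ 0) (hy : y ≠ 0)
    (hxy : x < y) (hxm : |x| ≤ m) (hym : |y| ≤ m) (hw : w y < w x) :
    len2 m (w * rfB x y) + 2 ≤ len2 m w := by
  have := len2_up (h.mul (rfB_SgB hx hy hxy.ne hxm hym)) hx hy hxy hxm hym
    (by simpa [rfB_left hx hy hxy.ne, rfB_right hx hy hxy.ne] using hw)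
  rwa [mul_assoc, rfB_mul_self hx hy hxy.ne, mul_one] at this

lemma len2_cover_of {m : ℕ} {w : Equiv.Perm ℤ} (h : SgB m w) {x y : ℤ} (hx : x ≠ 0) (hy : y ≠ 0)
    (hxy : x < y) (hxm : |x| ≤ m) (hym : |y| ≤ m) (hw : w x < w y)
    (hE : ∀ d ∈ EB m w (rfB x y), d = (x, y) ∨ d = (-y, -x)) :
    len2 m (w * rfB x y) = len2 m w + 2 := by
  rw [len2_mul h hx hy hxy hxm hym hw, ← sum_pair_wt (x := x) (y := y)]
  congr 2
  apply Finset.Subset.antisymm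
  · intro d hd; simpa using hE d hd
  · exact pair_sub_EB h hx hy hxy hxm hym hw

lemma len2_not_cover_of {m : ℕ} {w : Equiv.Perm ℤ} (h : SgB m w) {x y : ℤ} (hx : x ≠ 0)
    (hy : y ≠ 0) (hxy : x < y) (hxm : |x| ≤ m) (hym : |y| ≤ m) (hw : w x < w y)
    (d : ℤ × ℤ) (hd : d ∈ EB m w (rfB x y)) (h1 : d ≠ (x, y)) (h2 : d ≠ (-y, -x)) :
    len2 m (w * rfB x y) ≠ len2 m w + 2 := by
  rw [len2_mul h hx hy hxy hxm hym hw]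
  have : 2 < ∑ d ∈ EB m w (rfB x y), wtB d := by
    rw [← sum_pair_wt (x := x) (y := y)]
    apply Finset.sum_lt_sum_of_subset (pair_sub_EB h hx hy hxy hxm hym hw) hd
    · simp [h1, h2]
    · unfold wtB; split_ifs <;> omega
    · intros; omega
  omega


lemma s_mul_eq {m : ℕ} {w : Equiv.Perm ℤ} (h : SgB m w) (i : ℕ) :
    sB i * w = w * rfB (w⁻¹ (pB i)) (w⁻¹ (qB i)) := by
  rw [h.conj (h.inv.ne_zero (pB_ne i)) (h.inv.ne_zero (qB_ne i))
    (fun e => pB_ne_qB i (w⁻¹.injective e)), sB_eq]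
  simp

lemma pB_abs {m i : ℕ} (hi : i < m) : |pB i| ≤ m := by
  unfold pB; split_ifs
  · simp; omega
  · rw [abs_of_nonneg] <;> omega

lemma qB_abs {m i : ℕ} (hi : i < m) : |qB i| ≤ m := by
  unfold qB; rw [abs_of_nonneg] <;> omega

lemma len2_s_asc {m i : ℕ} {w : Equiv.Perm ℤ} (h : SgB m w) (hi : i < m)
    (ha : w⁻¹ (pB i) < w⁻¹ (qB i)) : len2 m (sB i * w) = len2 m w + 2 := by
  have hs := s_mul_eq h i
  rw [hs]
  apply len2_cover_of h (h.inv.ne_zero (pB_ne i)) (h.inv.ne_zero (qB_ne i)) ha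
    (h.inv.abs_le (pB_abs hi)) (h.inv.abs_le (qB_abs hi)) (by simpa using pB_lt_qB i)
  intro d hd
  rw [EB, Finset.mem_filter, mem_PB] at hd
  obtain ⟨⟨⟨h1, _⟩, ⟨h2, _⟩⟩, _, _, h3, h4⟩ := hd
  have e : ∀ b, w (rfB (w⁻¹ (pB i)) (w⁻¹ (qB i)) b) = sB i (w b) := by
    intro b
    have := congrArg (fun f : Equiv.Perm ℤ => f b) hs
    simpa using this.symm
  rw [e, e] at h4
  rcases sB_flip (h.ne_zero h1) (h.ne_zero h2) h3 h4 with ⟨e1, e2⟩ | ⟨e1, e2⟩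
  · left; rw [← e1, ← e2]; simp
  · right
    rw [← h.inv.odd, ← h.inv.odd, ← e1, ← e2]; simp

lemma sB_p (i : ℕ) : sB i (pB i) = qB i := by
  rw [sB_eq, rfB_left (pB_ne i) (qB_ne i) (pB_ne_qB i)]
lemma sB_q (i : ℕ) : sB i (qB i) = pB i := by
  rw [sB_eq, rfB_right (pB_ne i) (qB_ne i) (pB_ne_qB i)]
lemma sB_inv (i : ℕ) : (sB i)⁻¹ = sB i := inv_eq_of_mul_eq_one_left (sB_mul_self i)

lemma len2_s_desc {m i : ℕ} {w : Equiv.Perm ℤ} (h : SgB m w) (hi : i < m)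
    (ha : w⁻¹ (qB i) < w⁻¹ (pB i)) : len2 m (sB i * w) + 2 = len2 m w := by
  have := len2_s_asc ((sB_SgB hi).mul h) hi
    (by simpa only [mul_inv_rev, sB_inv, Equiv.Perm.mul_apply, sB_p, sB_q] using ha)
  rw [sB_mul_mul] at this
  exact this.symm

lemma asc_or_desc (w : Equiv.Perm ℤ) (i : ℕ) :
    w⁻¹ (pB i) < w⁻¹ (qB i) ∨ w⁻¹ (qB i) < w⁻¹ (pB i) :=
  lt_or_gt_of_ne fun e => pB_ne_qB i (w⁻¹.injective e)

/-- words of length `k` -/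
def wlB (m : ℕ) : ℕ → Finset (List ℕ)
  | 0 => {[]}
  | k + 1 => ((Finset.range m) ×ˢ wlB m k).image fun p => p.1 :: p.2

lemma mem_wlB {m k : ℕ} {l : List ℕ} : l ∈ wlB m k ↔ l.length = k ∧ ∀ i ∈ l, i < m := by
  induction k generalizing l with
  | zero => cases l <;> simp [wlB]
  | succ k ih =>
    cases l with
    | nil => simp [wlB]
    | cons a l => simp [wlB, ih]; tauto

open Classical in
/-- number of words of length `k` with product `w` -/
noncomputable def cw (m k : ℕ) (w : Equiv.Perm ℤ) : ℕ :=
  ((wlB m k).filter fun l => wordProd l = w).card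

lemma wordProd_cons (i : ℕ) (l : List ℕ) : wordProd (i :: l) = sB i * wordProd l := by
  simp [wordProd]

lemma cw_succ (m k : ℕ) (w : Equiv.Perm ℤ) :
    cw m (k + 1) w = ∑ i ∈ Finset.range m, cw m k (sB i * w) := by
  classical
  unfold cw
  rw [wlB]
  rw [Finset.filter_image, Finset.card_image_of_injective]
  · rw [Finset.card_filter, Finset.sum_product]
    apply Finset.sum_congr rfl
    intro i _
    rw [Finset.card_filter]
    apply Finset.sum_congr rfl
    intro l _
    congr 1
    rw [wordProd_cons]
    apply propext
    constructor
    · rintro rfl; rw [sB_mul_mul]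
    · intro e; rw [e, sB_mul_mul]
  · rintro ⟨a, b⟩ ⟨c, d⟩ h
    simpa using h

lemma cw_eq_zero {m k : ℕ} {w : Equiv.Perm ℤ} (h : SgB m w) (hk : 2 * k < len2 m w) :
    cw m k w = 0 := by
  classical
  induction k generalizing w with
  | zero =>
    unfold cw
    simp only [wlB, Finset.card_eq_zero]
    rw [Finset.filter_eq_empty_iff]
    intro l hl e
    simp only [Finset.mem_singleton] at hl
    subst hl
    have : w = 1 := by rw [← e]; rfl
    subst this
    have : len2 m 1 = 0 := by
      unfold len2
      apply Finset.sum_eq_zero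
      intro d _
      rw [if_neg]
      simp only [Equiv.Perm.one_apply]; omega
    omega
  | succ k ih =>
    rw [cw_succ]
    apply Finset.sum_eq_zero
    intro i hi
    rw [Finset.mem_range] at hi
    apply ih ((sB_SgB hi).mul h)
    rcases asc_or_desc w i with ha | ha
    · have := len2_s_asc h hi ha; omega
    · have := len2_s_desc h hi ha; omega

lemma sB_fix {i : ℕ} {a : ℤ} (h : (i : ℤ) + 1 < a) : sB i a = a := by
  rw [sB_eq, rfB_apply (pB_ne i) (qB_ne i) (pB_ne_qB i)]
  unfold pB qB
  split_ifs <;> omega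

/-- positions other than `r` -/
noncomputable def XB (m : ℕ) (r : ℤ) : Finset ℤ := ((Finset.Icc (-(m : ℤ)) m).erase 0).erase r

lemma mem_XB {m : ℕ} {r x : ℤ} : x ∈ XB m r ↔ x ≠ r ∧ x ≠ 0 ∧ |x| ≤ m := by
  simp [XB, abs_le]

lemma sum_kk {m : ℕ} {b : ℤ} (hb : b ≠ 0) (hbm : |b| < m) :
    ∑ i ∈ Finset.range m, kk (pB i) (qB i) b = 0 := by
  obtain ⟨u, hu⟩ : ∃ u : ℕ, b = u + 1 ∨ b = -(u + 1 : ℤ) := by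
    refine ⟨b.natAbs - 1, ?_⟩; omega
  have hum : u + 1 < m := by
    rcases hu with rfl | rfl
    · rw [abs_of_nonneg (by omega)] at hbm; omega
    · rw [abs_neg, abs_of_nonneg (by omega)] at hbm; omega
  have : ∀ i ∈ Finset.range m, kk (pB i) (qB i) b =
      (if i = u then b.sign else 0) + (if i = u + 1 then -b.sign else 0) := by
    intro i _
    rcases hu with rfl | rfl
    · rw [Int.sign_eq_one_of_pos (by omega)]
      unfold kk pB qB
      split_ifs <;> omega
    · rw [Int.sign_eq_neg_one_of_neg (by omega)]
      unfold kk pB qB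
      split_ifs <;> omega
  rw [Finset.sum_congr rfl this, Finset.sum_add_distrib, Finset.sum_ite_eq', Finset.sum_ite_eq']
  simp [hum, show u < m by omega]

lemma sB_moved {i : ℕ} {b : ℤ} (hb : sB i b ≠ b) : sB i = rfB (sB i b) b := by
  have h := rfB_apply (pB_ne i) (qB_ne i) (pB_ne_qB i) b
  rw [← sB_eq] at h
  have e1 := rfB_symm (pB_ne i) (qB_ne i) (pB_ne_qB i)
  have e2 := rfB_neg (pB_ne i) (qB_ne i) (pB_ne_qB i)
  have e3 := rfB_neg (qB_ne i) (pB_ne i) (pB_ne_qB i).symm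
  rw [← sB_eq] at e1 e2
  split_ifs at h with h1 h2 h3 h4
  · rw [h, h1, e1]
  · rw [h, h2, ← sB_eq]
  · rw [h, h3, e2]
  · rw [h, h4, e3, e1]
  · exact absurd h hb

open Classical in
lemma sum_sign {m i : ℕ} {w : Equiv.Perm ℤ} (h : SgB m w) (hi : i < m) {r : ℤ} (hr : 0 < r)
    (hrm : r < m) :
    ∑ x ∈ XB m r, (r - x).sign * (if sB i * (w * rfB x r) = w then (1 : ℤ) else 0) =
      (r - w⁻¹ (sB i (w r))).sign := by
  have hrabs : |r| ≤ m := by rw [abs_of_pos hr]; omega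
  by_cases hb : sB i (w r) = w r
  · rw [hb]
    rw [show w⁻¹ (w r) = r by simp, sub_self, Int.sign_zero]
    apply Finset.sum_eq_zero
    intro x hx
    rw [mem_XB] at hx
    rw [if_neg, mul_zero]
    intro e
    have := congrArg (fun f : Equiv.Perm ℤ => f x) e
    simp only [Equiv.Perm.mul_apply, rfB_left hx.2.1 hr.ne' hx.1, hb] at this
    exact hx.1 (w.injective this).symm
  · set x0 := w⁻¹ (sB i (w r)) with hx0
    have hSg := h.inv.mul ((sB_SgB hi).mul h)
    have hwx : w x0 = sB i (w r) := by simp [hx0]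
    have hmem : x0 ∈ XB m r := by
      rw [mem_XB]
      refine ⟨?_, ?_, ?_⟩
      · intro e; apply hb; rw [← hwx, e]
      · exact hSg.ne_zero hr.ne'
      · exact hSg.abs_le hrabs
    rw [Finset.sum_eq_single_of_mem x0 hmem]
    · rw [if_pos, mul_one]
      rw [mem_XB] at hmem
      rw [h.conj hmem.2.1 hr.ne' hmem.1, hwx, ← sB_moved hb, sB_mul_mul]
    · intro x hx hne
      rw [if_neg, mul_zero]
      intro e
      apply hne
      rw [mem_XB] at hx
      have := congrArg (fun f : Equiv.Perm ℤ => f r) e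
      simp only [Equiv.Perm.mul_apply, rfB_right hx.2.1 hr.ne' hx.1] at this
      apply w.injective
      rw [hwx, ← this, ← Equiv.Perm.mul_apply, sB_mul_self]; rfl

lemma sign_eq_kk {m i : ℕ} {w : Equiv.Perm ℤ} (h : SgB m w) (r : ℤ) :
    (r - w⁻¹ (sB i (w r))).sign = kk (pB i) (qB i) (w r) * (w⁻¹ (qB i) - w⁻¹ (pB i)).sign := by
  have := rfB_kk (pB_ne i) (qB_ne i) (pB_ne_qB i) (⇑(w⁻¹ : Equiv.Perm ℤ)) h.inv.odd (w r)
  rw [sB_eq, this]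
  rw [show w⁻¹ (w r) = r by simp]
  rw [show ∀ a b : ℤ, a - (a - b) = b by intros; ring, Int.sign_mul]
  congr 1
  unfold kk; split_ifs <;> rfl

/-- the dichotomy for an arbitrary reflection through `r` -/
lemma pos_of_cover {m : ℕ} {w : Equiv.Perm ℤ} (h : SgB m w) {x r : ℤ} (hx : x ∈ XB m r)
    (hr : 0 < r) (hrm : r < m) (hc : len2 m w < len2 m (w * rfB x r)) :
    (x < r ∧ w x < w r) ∨ (r < x ∧ w r < w x) := by
  rw [mem_XB] at hx
  have hrabs : |r| ≤ m := by rw [abs_of_pos hr]; omega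
  rcases lt_or_gt_of_ne hx.1 with h1 | h1
  · rcases lt_or_gt_of_ne (fun e => hx.1 (w.injective e) : w x ≠ w r) with h2 | h2
    · exact Or.inl ⟨h1, h2⟩
    · have := len2_down h hx.2.1 hr.ne' h1 hx.2.2 hrabs h2; omega
  · rcases lt_or_gt_of_ne (fun e => hx.1 (w.injective e) : w x ≠ w r) with h2 | h2
    · have := len2_down h hr.ne' hx.2.1 h1 hrabs hx.2.2 h2
      rw [rfB_symm hx.2.1 hr.ne' hx.1] at this
      omega
    · exact Or.inr ⟨h1, h2⟩

lemma cover_of_pos {m : ℕ} {w : Equiv.Perm ℤ} (h : SgB m w) {x r : ℤ} (hx : x ∈ XB m r)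
    (hr : 0 < r) (hrm : r < m) (hc : (x < r ∧ w x < w r) ∨ (r < x ∧ w r < w x)) :
    len2 m w + 2 ≤ len2 m (w * rfB x r) := by
  rw [mem_XB] at hx
  have hrabs : |r| ≤ m := by rw [abs_of_pos hr]; omega
  rcases hc with ⟨h1, h2⟩ | ⟨h1, h2⟩
  · exact len2_up h hx.2.1 hr.ne' h1 hx.2.2 hrabs h2
  · have := len2_up h hr.ne' hx.2.1 h1 hrabs hx.2.2 h2
    rwa [rfB_symm hx.2.1 hr.ne' hx.1] at this

lemma pos_s {m i : ℕ} {w : Equiv.Perm ℤ} (h : SgB m w) {x r : ℤ} (hx : x ∈ XB m r)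
    (hr : 0 < r) (hne : sB i * (w * rfB x r) ≠ w)
    (hc : (x < r ∧ w x < w r) ∨ (r < x ∧ w r < w x)) :
    (x < r ∧ (sB i * w) x < (sB i * w) r) ∨ (r < x ∧ (sB i * w) r < (sB i * w) x) := by
  rw [mem_XB] at hx
  have hwne : w x ≠ w r := fun e => hx.1 (w.injective e)
  have hsne : sB i (w x) ≠ sB i (w r) := fun e => hwne ((sB i).injective e)
  have hx0 := h.ne_zero hx.2.1
  have hr0 := h.ne_zero hr.ne'
  simp only [Equiv.Perm.mul_apply]
  rcases hc with ⟨h1, h2⟩ | ⟨h1, h2⟩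
  · left
    refine ⟨h1, ?_⟩
    by_contra hc
    have := sB_flip_eq (i := i) hx0 hr0 h2 (by omega)
    apply hne
    rw [h.conj hx.2.1 hr.ne' hx.1, ← this, sB_mul_mul]
  · right
    refine ⟨h1, ?_⟩
    by_contra hc
    have := sB_flip_eq (i := i) hr0 hx0 h2 (by omega)
    apply hne
    rw [h.conj hx.2.1 hr.ne' hx.1, rfB_symm hr0 hx0 hwne.symm, ← this, sB_mul_mul]

theorem chev (m k : ℕ) (w : Equiv.Perm ℤ) (h : SgB m w) (hm : w m = m) (r : ℤ) (hr : 0 < r)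
    (hrm : r < m) (hk : len2 m w = 2 * k) :
    ∑ x ∈ XB m r, (r - x).sign *
      (if len2 m (w * rfB x r) = 2 * k + 2 then (cw m (k + 1) (w * rfB x r) : ℤ) else 0) = 0 := by
  classical
  induction k using Nat.strong_induction_on generalizing w with
  | _ k ih =>
  have hrabs : |r| ≤ m := by rw [abs_of_pos hr]; omega
  have main : ∀ i ∈ Finset.range m, ∑ x ∈ XB m r, (r - x).sign *
      (if len2 m (w * rfB x r) = 2 * k + 2 then (cw m k (sB i * (w * rfB x r)) : ℤ) else 0) =
      kk (pB i) (qB i) (w r) * cw m k w := by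
    intro i hi
    rw [Finset.mem_range] at hi
    have hss := sum_sign h hi hr hrm
    rw [sign_eq_kk h] at hss
    have hSs := (sB_SgB hi).mul h
    rcases asc_or_desc w i with ha | ha
    · rw [Int.sign_eq_one_of_pos (by omega), mul_one] at hss
      rw [← hss, Finset.sum_mul]
      apply Finset.sum_congr rfl
      intro x hx
      rw [mul_assoc]
      congr 1
      have hx' := mem_XB.1 hx
      have hrf := rfB_SgB (m := m) hx'.2.1 hr.ne' hx'.1 hx'.2.2 hrabs
      have hasc := len2_s_asc h hi ha
      by_cases he : sB i * (w * rfB x r) = w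
      · have : w * rfB x r = sB i * w := by rw [← sB_mul_mul i (w * rfB x r), he]
        rw [if_pos he, if_pos (by rw [this]; omega), he, one_mul]
      · rw [if_neg he, zero_mul]
        split_ifs with hc
        · have p1 := pos_of_cover h hx hr hrm (by omega)
          have p2 := cover_of_pos hSs hx hr hrm (pos_s h hx hr he p1)
          rw [cw_eq_zero ((sB_SgB hi).mul (h.mul hrf)) (by rw [← mul_assoc]; omega)]
          rfl
        · rfl
    · rw [Int.sign_eq_neg_one_of_neg (by omega)] at hss
      have hdesc := len2_s_desc h hi ha
      obtain ⟨k', rfl⟩ : ∃ k', k = k' + 1 := ⟨k - 1, by omega⟩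
      have him : (sB i * w) m = m := by
        rw [Equiv.Perm.mul_apply, hm]
        have h1 : (m : ℤ) ≠ qB i := by
          intro e
          rw [← e, show w⁻¹ (m : ℤ) = m by rw [Equiv.Perm.inv_eq_iff_eq, hm]] at ha
          have := h.inv.abs_le (pB_abs hi)
          rw [abs_le] at this
          omega
        apply sB_fix
        unfold qB at h1
        omega
      have hI := ih k' (by omega) (sB i * w) hSs him (by omega)
      rw [show kk (pB i) (qB i) (w r) * (cw m (k' + 1) w : ℤ) =
        0 - (kk (pB i) (qB i) (w r) * -1) * cw m (k' + 1) w by ring, ← hss]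
      refine Eq.trans ?_ (congrArg (fun z => z - _) hI)
      rw [Finset.sum_mul, ← Finset.sum_sub_distrib]
      apply Finset.sum_congr rfl
      intro x hx
      rw [mul_assoc (r - x).sign, ← mul_sub]
      congr 1
      have hx' := mem_XB.1 hx
      have hrf := rfB_SgB (m := m) hx'.2.1 hr.ne' hx'.1 hx'.2.2 hrabs
      have hwS := h.mul hrf
      rw [mul_assoc]
      by_cases he : sB i * (w * rfB x r) = w
      · have : w * rfB x r = sB i * w := by rw [← sB_mul_mul i (w * rfB x r), he]
        rw [if_pos he, he, if_neg (by rw [this]; omega), if_pos (by omega)]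
        ring
      · rw [if_neg he, zero_mul, sub_zero]
        have hne2 : sB i * ((sB i * w) * rfB x r) ≠ sB i * w := by
          rw [mul_assoc, sB_mul_mul]
          intro e; apply he; rw [e, sB_mul_mul]
        have hpm : len2 m (sB i * (w * rfB x r)) = len2 m (w * rfB x r) + 2 ∨
            len2 m (sB i * (w * rfB x r)) + 2 = len2 m (w * rfB x r) := by
          rcases asc_or_desc (w * rfB x r) i with hb | hb
          · exact Or.inl (len2_s_asc hwS hi hb)
          · exact Or.inr (len2_s_desc hwS hi hb)
        by_cases hc : len2 m (sB i * (w * rfB x r)) = 2 * k' + 2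
        · have p1 := pos_of_cover hSs hx hr hrm (by rw [mul_assoc]; omega)
          have p2 := pos_s hSs hx hr hne2 p1
          rw [sB_mul_mul] at p2
          have p3 := cover_of_pos h hx hr hrm p2
          rw [if_pos hc, if_pos (by omega)]
        · rw [if_neg hc]
          split_ifs with hd
          · rw [cw_eq_zero ((sB_SgB hi).mul hwS) (by omega)]; rfl
          · rfl
  have hw0 : w r ≠ 0 := h.ne_zero hr.ne'
  have hwm : |w r| < m := by
    have h1 := h.abs_le hrabs
    rcases lt_or_eq_of_le h1 with h2 | h2
    · exact h2
    · exfalso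
      rcases abs_eq (by omega : (0 : ℤ) ≤ m) |>.1 h2 with h3 | h3
      · rw [← hm] at h3; have := w.injective h3; omega
      · rw [← hm, ← h.odd] at h3; have := w.injective h3; omega
  calc _ = ∑ x ∈ XB m r, ∑ i ∈ Finset.range m, (r - x).sign *
      (if len2 m (w * rfB x r) = 2 * k + 2 then (cw m k (sB i * (w * rfB x r)) : ℤ) else 0) := by
        apply Finset.sum_congr rfl
        intro x _
        rw [← Finset.mul_sum]
        congr 1
        split_ifs
        · rw [cw_succ]; push_cast; rfl
        · simp
    _ = 0 := by
        rw [Finset.sum_comm, Finset.sum_congr rfl main, ← Finset.sum_mul, sum_kk hw0 hwm, zero_mul]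


lemma rfB_cases {m : ℕ} {v : Equiv.Perm ℤ} (h : SgB m v) {x y : ℤ} (hx : x ≠ 0) (hy : y ≠ 0)
    (hxy : x ≠ y) (b : ℤ) :
    (b = x ∧ rfB x y b = y ∧ v b = v x ∧ v (rfB x y b) = v y) ∨
    (b = y ∧ rfB x y b = x ∧ v b = v y ∧ v (rfB x y b) = v x) ∨
    (b = -x ∧ rfB x y b = -y ∧ v b = -v x ∧ v (rfB x y b) = -v y) ∨
    (b = -y ∧ rfB x y b = -x ∧ v b = -v y ∧ v (rfB x y b) = -v x) ∨
    (b ≠ x ∧ b ≠ y ∧ b ≠ -x ∧ b ≠ -y ∧ rfB x y b = b ∧ v (rfB x y b) = v b) := by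
  rw [rfB_apply hx hy hxy]
  by_cases h1 : b = x
  · left; simp [h1]
  by_cases h2 : b = y
  · right; left; simp [h2, hxy.symm]
  by_cases h3 : b = -x
  · right; right; left; rw [if_neg h1, if_neg h2, if_pos h3, h3, h.odd, h.odd]; simp
  by_cases h4 : b = -y
  · right; right; right; left
    rw [if_neg h1, if_neg h2, if_neg h3, if_pos h4, h4, h.odd, h.odd]; simp
  · simp [h1, h2, h3, h4]

lemma cover_crit {m : ℕ} {v : Equiv.Perm ℤ} (h : SgB m v) {x y : ℤ} (hx : x ≠ 0) (hy : y ≠ 0)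
    (hxy : x < y) (hxm : |x| ≤ m) (hym : |y| ≤ m) (hv : v x < v y)
    (hnb : ∀ c, ¬(x < c ∧ c < y ∧ v x < v c ∧ v c < v y)) (hs : 0 < x ∨ v y < 0) :
    len2 m (v * rfB x y) = len2 m v + 2 := by
  apply len2_cover_of h hx hy hxy hxm hym hv
  rintro ⟨a, b⟩ hd
  rw [EB, Finset.mem_filter] at hd
  obtain ⟨_, h1, h2, h3, h4⟩ := hd
  simp only at h1 h2 h3 h4
  have na := hnb a
  have nb := hnb b
  have nna := hnb (-a)
  have nnb := hnb (-b)
  rw [h.odd] at nna nnb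
  simp only [Prod.mk.injEq]
  rcases rfB_cases h hx hy hxy.ne a with ha | ha | ha | ha | ha <;>
  rcases rfB_cases h hx hy hxy.ne b with hb | hb | hb | hb | hb <;> omega

lemma not_cover_crit {m : ℕ} {v : Equiv.Perm ℤ} (h : SgB m v) {x y : ℤ} (hx : x ≠ 0) (hy : y ≠ 0)
    (hxy : x < y) (hxm : |x| ≤ m) (hym : |y| ≤ m) (c : ℤ) (hc0 : c ≠ 0)
    (hcx : c ≠ -x) (hcy : c ≠ -y) (h1 : x < c) (h2 : c < y) (h3 : v x < v c) (h4 : v c < v y) :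
    len2 m (v * rfB x y) ≠ len2 m v + 2 := by
  apply len2_not_cover_of h hx hy hxy hxm hym (by omega) (x, c)
  · rw [EB, Finset.mem_filter, mem_PB]
    simp only
    refine ⟨⟨⟨hx, hxm⟩, hc0, ?_⟩, h1, ?_⟩
    · rw [abs_le] at *; omega
    · rw [rfB_left hx hy hxy.ne]
      rcases rfB_cases h hx hy hxy.ne c with ha | ha | ha | ha | ha <;> omega
  · simp; omega
  · simp; omega

/-- One step of the transition recurrence. -/
lemma trans_step {m K : ℕ} {w : Equiv.Perm ℤ} (h : SgB m w) (hm : w m = m) {r j k : ℤ}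
    (hr : 0 < r) (hrm : r < m) (hK : len2 m w = 2 * K)
    (htail : ∀ x y : ℤ, r < x → x < y → y ≤ m → w x < w y)
    (hrj : r < j) (hjm : j ≤ m) (hj : w j < w r) (hj0 : w j < 0)
    (hjlast : ∀ x, j < x → x ≤ m → w r < w x)
    (hpre : ∀ i, 0 < i → i < r → |w i| < -w j)
    (hra : w r ≤ -w j) (hrk : r < k) (hkm : k < m) (hk : -w j < w k)
    (hkfirst : ∀ i, r < i → i < k → w i ≤ -w j) :
    ∃ w' : Equiv.Perm ℤ, SgB m w' ∧ w' m = m ∧ len2 m w' = 2 * K ∧ cw m K w' = cw m K w ∧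
      w' r = -w k ∧ w' j = w r ∧ w' k = -w j ∧ ∀ i, 0 < i → i ≠ r → i ≠ j → i ≠ k → w' i = w i := by
  have hjm' : j < m := by
    rcases lt_or_eq_of_le hjm with h1 | h1
    · exact h1
    · rw [h1, hm] at hj0; omega
  have hjk : j ≠ k := by rintro rfl; omega
  have rabs : |r| ≤ m := by rw [abs_le]; omega
  have jabs : |j| ≤ m := by rw [abs_le]; omega
  have kabs : |k| ≤ m := by rw [abs_le]; omega
  have hr0 : r ≠ 0 := by omega
  have hj0' : j ≠ 0 := by omega
  have hk0' : k ≠ 0 := by omega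
  set v := w * rfB j r with hv
  have hvS : SgB m v := h.mul (rfB_SgB hj0' hr0 hrj.ne' jabs rabs)
  have hvr : v r = w j := by simp [hv, rfB_right hj0' hr0 hrj.ne']
  have hvj : v j = w r := by simp [hv, rfB_left hj0' hr0 hrj.ne']
  have hvo : ∀ i, 0 < i → i ≠ r → i ≠ j → v i = w i := by
    intro i h1 h2 h3
    rw [hv, Equiv.Perm.mul_apply, rfB_apply hj0' hr0 hrj.ne']
    rw [if_neg h3, if_neg h2, if_neg (by omega), if_neg (by omega)]
  have hvm : v m = m := by rw [hvo m (by omega) (by omega) (by omega), hm]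
  have hvk : v k = w k := hvo k (by omega) (by omega) hjk.symm
  have hwv : w = v * rfB j r := by
    rw [hv, mul_assoc, rfB_mul_self hj0' hr0 hrj.ne', mul_one]
  have hvtail : ∀ x y : ℤ, r < x → x < y → y ≤ m → v x < v y := by
    intro x y h1 h2 h3
    by_cases e1 : x = j
    · subst e1
      rw [hvj, hvo y (by omega) (by omega) (by omega)]
      exact hjlast y h2 h3
    · by_cases e2 : y = j
      · subst e2
        rw [hvj, hvo x (by omega) (by omega) (by omega)]
        exact (htail x y h1 h2 h3).trans hj
      · rw [hvo x (by omega) (by omega) e1, hvo y (by omega) (by omega) e2]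
        exact htail x y h1 h2 h3
  -- the cover giving `w`
  have c1 : len2 m w = len2 m v + 2 := by
    have := cover_crit hvS hr0 hj0' hrj rabs jabs (by omega) (by
      rintro c ⟨h1, h2, h3, h4⟩
      rw [hvo c (by omega) (by omega) (by omega)] at h3
      have := htail c j h1 h2 hjm
      omega) (Or.inl hr)
    rwa [rfB_symm hj0' hr0 hrj.ne', ← hwv] at this
  obtain ⟨K', rfl⟩ : ∃ K', K = K' + 1 := ⟨K - 1, by omega⟩
  have hvK : len2 m v = 2 * K' := by omega
  have hvpre : ∀ i, 0 < i → i < r → |v i| < -v r := by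
    intro i h1 h2
    rw [hvo i h1 (by omega) (by omega), hvr]; exact hpre i h1 h2
  set w' := v * rfB (-k) r with hw'
  have c2 : len2 m w' = len2 m v + 2 := by
    apply cover_crit hvS (by omega) hr0 (by omega) (by rwa [abs_neg]) rabs
      (by rw [hvS.odd]; omega) _ (by right; omega)
    rintro c ⟨h1, h2, h3, h4⟩
    rw [hvS.odd] at h3
    by_cases e1 : c < -r
    · have o := hvS.odd c
      have t1 := hvtail (-c) k (by omega) (by omega) (by omega)
      by_cases e2 : -c = j
      · rw [e2] at o; omega
      · have o2 := hvo (-c) (by omega) (by omega) e2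
        have := hkfirst (-c) (by omega) (by omega)
        omega
    · by_cases e2 : c = -r
      · rw [e2, hvS.odd] at h4; omega
      · rcases lt_trichotomy c 0 with e3 | e3 | e3
        · have := hvpre (-c) (by omega) (by omega)
          rw [hvS.odd, abs_neg, abs_lt] at this
          omega
        · rw [e3, hvS.zero] at h4; omega
        · have := hvpre c (by omega) (by omega)
          rw [abs_lt] at this
          omega
  have hch := chev m K' v hvS hvm r hr hrm hvK
  have hjX : j ∈ XB m r := mem_XB.2 ⟨by omega, by omega, jabs⟩
  have hkX : -k ∈ XB m r := mem_XB.2 ⟨by omega, by omega, by rwa [abs_neg]⟩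
  have hsum : ∑ x ∈ XB m r, (r - x).sign *
      (if len2 m (v * rfB x r) = 2 * K' + 2 then (cw m (K' + 1) (v * rfB x r) : ℤ) else 0) =
      ∑ x ∈ ({j, -k} : Finset ℤ), (r - x).sign *
      (if len2 m (v * rfB x r) = 2 * K' + 2 then (cw m (K' + 1) (v * rfB x r) : ℤ) else 0) := by
    symm
    apply Finset.sum_subset
    · intro x hx
      simp only [Finset.mem_insert, Finset.mem_singleton] at hx
      rcases hx with rfl | rfl <;> assumption
    · intro x hx hx2
      simp only [Finset.mem_insert, Finset.mem_singleton, not_or] at hx2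
      rw [if_neg, mul_zero]
      intro hc
      have hp := pos_of_cover hvS hx hr hrm (by omega)
      have hx3 := mem_XB.1 hx
      have hx4 := hx3.2.2
      rw [abs_le] at hx4
      rcases hp with ⟨p1, p2⟩ | ⟨p1, p2⟩
      · -- `x < r`
        by_cases e1 : 0 < x
        · have := hvpre x e1 p1
          rw [abs_lt] at this; omega
        · have o := hvS.odd x
          by_cases e2 : -r < x
          · have := hvpre (-x) (by omega) (by omega)
            rw [abs_lt] at this; omega
          · by_cases e3 : x = -r
            · rw [e3] at p2; have := hvS.odd r; omega
            · by_cases e4 : -x < k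
              · by_cases e5 : -x = j
                · rw [e5] at o; omega
                · have o2 := hvo (-x) (by omega) (by omega) e5
                  have := hkfirst (-x) (by omega) e4
                  omega
              · have t1 := hvtail k (-x) (by omega) (by omega) (by omega)
                have ok := hvS.odd k
                exact not_cover_crit hvS hx3.2.1 hr0 p1 hx3.2.2 rabs (-k) (by omega) (by omega)
                  (by omega) (by omega) (by omega) (by omega) (by omega) (by omega)
      · -- `r < x`
        by_cases e1 : x < j
        · have := htail x j p1 e1 hjm
          rw [hvo x (by omega) (by omega) (by omega)] at p2
          omega
        · have t1 := hvtail j x (by omega) (by omega) (by omega)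
          have := not_cover_crit hvS hr0 hx3.2.1 p1 rabs hx3.2.2 j (by omega) (by omega)
                  (by omega) (by omega) (by omega) (by omega) (by omega)
          rw [rfB_symm hx3.2.1 hr0 hx3.1] at this
          omega
  rw [hsum, Finset.sum_pair (by omega), ← hwv, ← hw', if_pos (by omega), if_pos (by omega),
    Int.sign_eq_neg_one_of_neg (by omega), Int.sign_eq_one_of_pos (by omega)] at hch
  have hap : ∀ b, w' b = v (rfB (-k) r b) := fun b => by simp [hw']
  have hw'o : ∀ i, 0 < i → i ≠ r → i ≠ k → w' i = v i := by
    intro i h1 h2 h3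
    rw [hap, rfB_apply (by omega) hr0 (by omega)]
    rw [if_neg (by omega), if_neg h2, if_neg (by omega), if_neg (by omega)]
  refine ⟨w', hvS.mul (rfB_SgB (by omega) hr0 (by omega) (by rwa [abs_neg]) rabs), ?_, by omega,
    by omega, ?_, ?_, ?_, ?_⟩
  · rw [hw'o m (by omega) (by omega) (by omega), hvm]
  · rw [hap, rfB_right (by omega) hr0 (by omega), hvS.odd, hvk]
  · rw [hw'o j (by omega) (by omega) hjk, hvj]
  · have := (hvS.mul (rfB_SgB (x := -k) (by omega) hr0 (by omega) (by rwa [abs_neg]) rabs)).odd (-k)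
    have e : w' (-k) = v r := by rw [hap, rfB_left (by omega) hr0 (by omega)]
    rw [neg_neg, ← hw', e, hvr] at this
    exact this
  · intro i h1 h2 h3 h4
    rw [hw'o i h1 h2 h4, hvo i h1 h2 h3]


/-- A state of the transition process. -/
structure StB (m K : ℕ) (r : ℤ) (S : ℤ → Prop) (w : Equiv.Perm ℤ) : Prop where
  sg : SgB m w
  wm : w m = m
  len : len2 m w = 2 * K
  tail : ∀ x y : ℤ, r < x → x < y → y ≤ m → w x < w y
  pre : ∀ i : ℤ, 0 < i → i < r → w i = i ∨ w i = -i
  neg : ∀ x : ℤ, 0 < x → (S x ↔ ∃ i, r < i ∧ w i = -x)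

lemma StB.congr {m K : ℕ} {r : ℤ} {S T : ℤ → Prop} {w : Equiv.Perm ℤ} (st : StB m K r S w)
    (h : ∀ x, 0 < x → (S x ↔ T x)) : StB m K r T w :=
  ⟨st.sg, st.wm, st.len, st.tail, st.pre, fun x hx => by rw [← h x hx]; exact st.neg x hx⟩

lemma StB.tail_ge {m K : ℕ} {r : ℤ} {S : ℤ → Prop} {w : Equiv.Perm ℤ} (st : StB m K r S w)
    {x : ℤ} (hr : 0 ≤ r) (hx : r < x) (h : 0 < w x) : r ≤ w x := by
  by_contra hc
  rcases st.pre (w x) h (by omega) with e | e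
  · have := w.injective e; omega
  · have : w (-(w x)) = w x := by rw [st.sg.odd, e, neg_neg]
    have := w.injective this; omega

lemma StB.le_m {m K : ℕ} {r : ℤ} {S : ℤ → Prop} {w : Equiv.Perm ℤ} (st : StB m K r S w)
    {x : ℤ} (hx : 0 < x) (h : w x < 0) : x ≤ m := by
  by_contra hc
  have := st.sg.fix x (by rw [abs_of_pos hx]; omega)
  omega

lemma st_step {m K : ℕ} {r : ℤ} {S : ℤ → Prop} {w : Equiv.Perm ℤ} (st : StB m K r S w)
    (hr : 0 < r) (hrm : r < m) {a : ℤ} (ha : S a) (har : r ≤ a) (hac : -a < w r)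
    (hmin : ∀ y, 0 < y → S y → -y < w r → a ≤ y) (hs : ¬ S (a + 1)) (hcr : w r ≤ r)
    (ham : a + 1 < m) :
    ∃ w', StB m K r (fun x => (S x ∧ x ≠ a) ∨ x = -w r) w' ∧ cw m K w' = cw m K w ∧
      w' r = -(a + 1) ∧ ∀ i, 0 < i → i < r → w' i = w i := by
  obtain ⟨j, hrj, hwj⟩ := (st.neg a (by omega)).1 ha
  have inj : ∀ x y : ℤ, w x = w y → x = y := fun x y h => w.injective h
  have hjm : j ≤ m := st.le_m (by omega) (by omega)
  obtain ⟨k, hk⟩ := w.surjective (a + 1)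
  have hkm1 : ¬ (m:ℤ) < |k| := fun h => by
    have := st.sg.fix k h
    rw [this] at hk
    rw [hk, abs_of_pos (by omega)] at h; omega
  have hkm : |k| ≤ m := by omega
  rw [abs_le] at hkm
  have hko := st.sg.odd k
  have hjo := st.sg.odd j
  have hz := st.sg.zero
  have hkm2 : k ≠ m := by rintro rfl; have := st.wm; omega
  have hk0 : k ≠ 0 := by rintro rfl; omega
  have hrk : r < k := by
    by_contra hc
    rcases lt_trichotomy k 0 with h | h | h
    · rcases lt_trichotomy (-k) r with h1 | h1 | h1
      · have := st.pre (-k) (by omega) h1; omega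
      · rw [h1] at hko; omega
      · exact hs ((st.neg (a+1) (by omega)).2 ⟨-k, h1, by omega⟩)
    · exact hk0 h
    · rcases lt_or_eq_of_le (not_lt.1 hc) with h1 | h1
      · have := st.pre k h h1; omega
      · subst h1; omega
  have hjlast : ∀ x, j < x → x ≤ m → w r < w x := by
    intro x h1 h2
    have t := st.tail j x hrj h1 h2
    have n1 : w x ≠ w r := fun e => by have := inj _ _ e; omega
    have n2 : w x ≠ 0 := st.sg.ne_zero (by omega)
    rcases lt_or_gt_of_ne n2 with h3 | h3
    · by_contra hc
      have := hmin (-w x) (by omega) ((st.neg (-w x) (by omega)).2 ⟨x, by omega, by omega⟩) (by omega)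
      omega
    · have := st.tail_ge hr.le (by omega : r < x) h3; omega
  have hra : w r ≠ a := fun e => by
    have := inj (-j) r (by omega); omega
  obtain ⟨w', h1, h2, h3, h4, h5, h6, h7, h8⟩ := trans_step st.sg st.wm hr hrm st.len st.tail hrj hjm
    (by omega) (by omega) hjlast (fun i hi hi2 => by
      have := st.pre i hi hi2
      rw [abs_lt]; omega) (by omega) hrk (by omega) (by omega) (fun i hi hi2 => by
      have := st.tail i k hi hi2 (by omega); omega)
  have hjk : j < k := by
    by_contra hc
    have : k ≠ j := by rintro rfl; omega
    have := st.tail k j hrk (by omega) hjm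
    omega
  refine ⟨w', ⟨h1, h2, h3, ?_, ?_, ?_⟩, h4, by omega, fun i hi hi2 => h8 i hi (by omega) (by omega) (by omega)⟩
  · intro x y hx hxy hy
    have na : w x ≠ a := fun e => by have := inj (-j) x (by omega); omega
    have t := st.tail x y hx hxy hy
    by_cases e1 : x = j
    · subst e1
      by_cases e2 : y = k
      · subst e2; omega
      · have := hjlast y hxy hy
        rw [h6, h8 y (by omega) (by omega) (by omega) e2]; exact this
    · by_cases e2 : x = k
      · subst e2
        rw [h7, h8 y (by omega) (by omega) (by omega) (by omega)]; omega
      · rw [h8 x (by omega) (by omega) e1 e2]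
        by_cases e3 : y = j
        · subst e3; omega
        · by_cases e4 : y = k
          · subst e4; omega
          · rw [h8 y (by omega) (by omega) e3 e4]; exact t
  · intro i hi hi2
    rw [h8 i hi (by omega) (by omega) (by omega)]; exact st.pre i hi hi2
  · intro x hx
    rw [st.neg x hx]
    constructor
    · rintro (⟨⟨i, hi, hi2⟩, h⟩ | h)
      · exact ⟨i, hi, by rw [h8 i (by omega) (by omega) (by rintro rfl; omega) (by rintro rfl; omega), hi2]⟩
      · exact ⟨j, hrj, by omega⟩
    · rintro ⟨i, hi, hi2⟩
      by_cases e1 : i = j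
      · subst e1; right; omega
      · by_cases e2 : i = k
        · subst e2; omega
        · rw [h8 i (by omega) (by omega) e1 e2] at hi2
          left
          refine ⟨⟨i, hi, hi2⟩, ?_⟩
          rintro rfl
          have := inj i j (by omega); omega

lemma st_merge {m K : ℕ} {r : ℤ} {S : ℤ → Prop} {w : Equiv.Perm ℤ} (st : StB m K r S w)
    (hr : 0 < r) (hmin : ∀ y, 0 < y → S y → w r < -y) (hcr : w r ≤ r) :
    StB m K (r - 1) (fun x => S x ∨ x = -w r) w := by
  refine ⟨st.sg, st.wm, st.len, ?_, fun i h1 h2 => st.pre i h1 (by omega), ?_⟩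
  · intro x y hx hxy hy
    by_cases e : x = r
    · subst e
      have n1 : w y ≠ w x := fun e => by have := w.injective e; omega
      have n2 : w y ≠ 0 := st.sg.ne_zero (by omega)
      rcases lt_or_gt_of_ne n2 with h3 | h3
      · have := hmin (-w y) (by omega) ((st.neg (-w y) (by omega)).2 ⟨y, by omega, by omega⟩)
        omega
      · have := st.tail_ge hr.le hxy h3; omega
    · exact st.tail x y (by omega) hxy hy
  · intro x hx
    rw [st.neg x hx]
    constructor
    · rintro (⟨i, hi, hi2⟩ | h)
      · exact ⟨i, by omega, hi2⟩
      · exact ⟨r, by omega, by omega⟩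
    · rintro ⟨i, hi, hi2⟩
      by_cases e : i = r
      · subst e; right; omega
      · left; exact ⟨i, by omega, hi2⟩

lemma stageA_aux {m K : ℕ} {p : ℤ} {k : ℕ} {w : Equiv.Perm ℤ} (hp : 0 < p)
    (hm : p + 2 * k < m)
    (st : StB m K p (fun x => p < x ∧ x < p + 2 * k ∧ (x - p) % 2 = 1) w) (hw : w p = -p) (j : ℕ)
    (hj : j ≤ k) :
    ∃ w', StB m K p (fun x => (p ≤ x ∧ x < p + 2 * j ∧ (x - p) % 2 = 0) ∨
        (p + 2 * j < x ∧ x < p + 2 * k ∧ (x - p) % 2 = 1)) w' ∧ cw m K w' = cw m K w ∧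
      w' p = -(p + 2 * j) ∧ ∀ i, 0 < i → i < p → w' i = w i := by
  induction j with
  | zero =>
    refine ⟨w, st.congr ?_, rfl, by push_cast; omega, fun _ _ _ => rfl⟩
    intro x hx; push_cast; omega
  | succ j ih =>
    obtain ⟨w1, s1, c1, v1, q1⟩ := ih (by omega)
    obtain ⟨w2, s2, c2, v2, q2⟩ := st_step s1 hp (by omega) (a := p + 2 * j + 1)
      (by right; omega) (by omega) (by omega) (by intro y _ _ _; omega) (by omega) (by omega) (by omega)
    refine ⟨w2, s2.congr ?_, c2.trans c1, by rw [v2]; push_cast; ring, fun i h1 h2 => by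
      rw [q2 i h1 h2, q1 i h1 h2]⟩
    intro x hx; push_cast; omega

lemma stageA {m K : ℕ} {p : ℤ} {k : ℕ} {w : Equiv.Perm ℤ} (hp : 0 < p)
    (hm : p + 2 * k < m)
    (st : StB m K p (fun x => p < x ∧ x < p + 2 * k ∧ (x - p) % 2 = 1) w) (hw : w p = -p) :
    ∃ w', StB m K (p - 1) (fun x => p - 1 < x ∧ x < p - 1 + 2 * (k + 1 : ℕ) ∧ (x - (p - 1)) % 2 = 1) w' ∧
      cw m K w' = cw m K w ∧ ∀ i, 0 < i → i < p → w' i = w i := by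
  obtain ⟨w1, s1, c1, v1, q1⟩ := stageA_aux hp hm st hw k le_rfl
  refine ⟨w1, (st_merge s1 hp ?_ (by omega)).congr ?_, c1, q1⟩
  · intro y _ _; omega
  · intro x hx; push_cast; omega

lemma stageB_aux {m K : ℕ} {p q : ℤ} {k : ℕ} {w : Equiv.Perm ℤ} (hp : 0 < p) (hpq : p < q)
    (hm : q + 2 * k - 1 < m)
    (st : StB m K p (fun x => q ≤ x ∧ x < q + 2 * k ∧ (x - q) % 2 = 0) w) (hw : w p = p) (j : ℕ)
    (hj : j + 1 ≤ k) :
    ∃ w', StB m K p (fun x => (q + 1 ≤ x ∧ x < q + 2 * j + 1 ∧ (x - q) % 2 = 1) ∨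
        (q + 2 * j + 2 ≤ x ∧ x < q + 2 * k ∧ (x - q) % 2 = 0)) w' ∧ cw m K w' = cw m K w ∧
      w' p = -(q + 2 * j + 1) ∧ ∀ i, 0 < i → i < p → w' i = w i := by
  induction j with
  | zero =>
    obtain ⟨w2, s2, c2, v2, q2⟩ := st_step st hp (by omega) (a := q)
      (by omega) (by omega) (by omega) (by intro y _ _ _; omega) (by omega) (by omega) (by omega)
    refine ⟨w2, s2.congr ?_, c2, by rw [v2]; push_cast; ring, q2⟩
    intro x hx; push_cast; omega
  | succ j ih =>
    obtain ⟨w1, s1, c1, v1, q1⟩ := ih (by omega)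
    obtain ⟨w2, s2, c2, v2, q2⟩ := st_step s1 hp (by omega) (a := q + 2 * j + 2)
      (by right; omega) (by omega) (by omega) (by intro y _ _ _; omega) (by omega) (by omega) (by omega)
    refine ⟨w2, s2.congr ?_, c2.trans c1, by rw [v2]; push_cast; ring, fun i h1 h2 => by
      rw [q2 i h1 h2, q1 i h1 h2]⟩
    intro x hx; push_cast; omega

lemma stageB {m K : ℕ} {p q : ℤ} {k : ℕ} {w : Equiv.Perm ℤ} (hp : 0 < p) (hpq : p < q)
    (hm : q + 2 * k - 1 < m)
    (st : StB m K p (fun x => q ≤ x ∧ x < q + 2 * k ∧ (x - q) % 2 = 0) w) (hw : w p = p) :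
    ∃ w', StB m K (p - 1) (fun x => q + 1 ≤ x ∧ x < q + 1 + 2 * k ∧ (x - (q + 1)) % 2 = 0) w' ∧
      cw m K w' = cw m K w ∧ ∀ i, 0 < i → i < p → w' i = w i := by
  rcases k with _ | k
  · refine ⟨w, (st_merge st hp ?_ (by omega)).congr ?_, rfl, fun _ _ _ => rfl⟩
    · intro y _ _; omega
    · intro x hx; push_cast; omega
  · obtain ⟨w1, s1, c1, v1, q1⟩ := stageB_aux hp hpq hm st hw k le_rfl
    refine ⟨w1, (st_merge s1 hp ?_ (by omega)).congr ?_, c1, q1⟩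
    · intro y _ _; omega
    · intro x hx; push_cast; omega

/-- Iterating stage A from `p = n` down to `p = n - k + 1`. -/
lemma stagesA {m K n : ℕ} (hm : m = 2 * n) {w : Equiv.Perm ℤ} (k : ℕ) (hk : k ≤ n)
    (st : StB m K n (fun _ => False) w) (hw : ∀ i : ℤ, (n : ℤ) - k < i → i ≤ n → w i = -i) :
    ∃ w', StB m K ((n : ℤ) - k) (fun x => (n : ℤ) - k < x ∧ x < (n : ℤ) - k + 2 * k ∧
      (x - ((n : ℤ) - k)) % 2 = 1) w' ∧
      cw m K w' = cw m K w ∧ ∀ i : ℤ, 0 < i → i ≤ (n : ℤ) - k → w' i = w i := by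
  induction k with
  | zero =>
    refine ⟨w, ?_, rfl, fun _ _ _ => rfl⟩
    have := st.congr (T := (fun x => (n : ℤ) - (0 : ℕ) < x ∧ x < (n : ℤ) - (0 : ℕ) + 2 * (0 : ℕ) ∧
      (x - ((n : ℤ) - (0 : ℕ))) % 2 = 1)) (by
        intro x hx
        refine ⟨fun h => h.elim, ?_⟩
        rintro ⟨h1, h2, _⟩
        push_cast at h1 h2; omega)
    simpa using this
  | succ k ih =>
    obtain ⟨w1, s1, c1, q1⟩ := ih (by omega) (fun i h1 h2 => hw i (by push_cast; omega) h2)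
    obtain ⟨w2, s2, c2, q2⟩ := stageA (by omega) (by omega) s1 (by
      rw [q1 _ (by omega) (by omega), hw _ (by push_cast; omega) (by omega)])
    have e : (n : ℤ) - k - 1 = (n : ℤ) - (k + 1 : ℕ) := by push_cast; ring
    rw [e] at s2
    refine ⟨w2, s2, c2.trans c1, ?_⟩
    intro i h1 h2
    rw [q2 i h1 (by push_cast at h2; omega), q1 i h1 (by push_cast at h2; omega)]


open Polynomial in
lemma lagr_id {ι : Type*} [DecidableEq ι] (s : Finset ι) (f a : ι → ℚ) (hf : Set.InjOn f s) :
    ∑ i ∈ s, a i * ∏ j ∈ s.erase i, ((f i - f j - a j) / (f i - f j)) = ∑ i ∈ s, a i := by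
  rcases s.eq_empty_or_nonempty with rfl | hne
  · simp
  have hc : 0 < s.card := hne.card_pos
  set P : ℚ[X] := ∏ j ∈ s, (X - C (f j)) - ∏ j ∈ s, (X - C (f j + a j)) with hP
  have m1 := monic_prod_X_sub_C f s
  have m2 := monic_prod_X_sub_C (fun j => f j + a j) s
  have d1 : (∏ j ∈ s, (X - C (f j))).degree = (s.card : WithBot ℕ) := by
    simp [degree_prod]
  have d2 : (∏ j ∈ s, (X - C (f j + a j))).degree = (s.card : WithBot ℕ) := by
    rw [degree_prod]; simp only [degree_X_sub_C]; simp
  have hdeg : P.degree < s.card := by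
    rw [← d1]
    apply degree_sub_lt_left
    · rw [d1, d2]
    · exact m1.ne_zero
    · rw [m1.leadingCoeff]; exact m2.leadingCoeff.symm
  have h := Lagrange.coeff_eq_sum hf hdeg
  rw [hP, coeff_sub, prod_X_sub_C_coeff_card_pred _ _ hc,
    prod_X_sub_C_coeff_card_pred s (fun j => f j + a j) hc, Finset.sum_add_distrib] at h
  have h2 : ∑ i ∈ s, a i = -∑ x ∈ s, f x - -(∑ x ∈ s, f x + ∑ x ∈ s, a x) := by ring
  rw [h2, h]
  apply Finset.sum_congr rfl
  intro i hi
  rw [Finset.prod_div_distrib, ← mul_div_assoc]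
  congr 1
  rw [eval_sub, eval_prod, eval_prod, Finset.prod_eq_zero hi (by simp),
    ← Finset.mul_prod_erase s _ hi]
  simp only [eval_sub, eval_X, eval_C]
  rw [show f i - (f i + a i) = -a i by ring]
  rw [neg_mul, sub_neg_eq_add, zero_add]
  congr 1
  apply Finset.prod_congr rfl
  intro j _; ring

/-- pair factor -/
def dB (x y : ℕ) : ℚ := if y < x then ((x : ℚ) - y) / (x + y) else 1

/-- shifted hook product -/
def hB (S : Finset ℕ) : ℚ := (∏ x ∈ S, (1 / (x.factorial : ℚ))) * ∏ x ∈ S, ∏ y ∈ S, dB x y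

lemma dB_mul {x y : ℕ} (h : x ≠ y) : dB x y * dB y x = |(x : ℚ) - y| / (x + y) := by
  unfold dB
  rcases lt_or_gt_of_ne h with h | h
  · have : (x:ℚ) < y := by exact_mod_cast h
    rw [if_neg (by omega), if_pos h, abs_of_neg (by linarith), one_mul, add_comm (y:ℚ)]; ring
  · have : (y:ℚ) < x := by exact_mod_cast h
    rw [if_pos h, if_neg (by omega), abs_of_pos (by linarith), mul_one]

lemma hB_insert {z : ℕ} {T : Finset ℕ} (hz : z ∉ T) :
    hB (insert z T) = hB T * (1 / (z.factorial : ℚ)) * ∏ y ∈ T, (|(z : ℚ) - y| / (z + y)) := by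
  have e : ∏ y ∈ T, (|(z : ℚ) - y| / (z + y)) = (∏ y ∈ T, dB z y) * ∏ y ∈ T, dB y z := by
    rw [← Finset.prod_mul_distrib]
    apply Finset.prod_congr rfl
    intro y hy
    rw [dB_mul]; rintro rfl; exact hz hy
  rw [e]
  unfold hB
  simp only [Finset.prod_insert hz, Finset.prod_mul_distrib]
  have : dB z z = 1 := by simp [dB]
  rw [this]; ring

lemma hB_pos (S : Finset ℕ) : 0 < hB S := by
  unfold hB
  apply mul_pos
  · apply Finset.prod_pos; intro x _; positivity
  · apply Finset.prod_pos; intro x _; apply Finset.prod_pos; intro y _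
    unfold dB
    split_ifs with h
    · have : (y:ℚ) < x := by exact_mod_cast h
      apply div_pos
      · linarith
      · have : (0:ℚ) ≤ y := by positivity
        linarith
    · norm_num

/-- lowering the part `i+1` to `i` -/
def lowB (S : Finset ℕ) (i : ℕ) : Finset ℕ :=
  if i = 0 then S.erase 1 else insert i (S.erase (i + 1))

lemma sum_lowB {S : Finset ℕ} {i : ℕ} (h1 : i + 1 ∈ S) (h2 : i ∉ S) :
    ∑ x ∈ lowB S i, x + 1 = ∑ x ∈ S, x := by
  unfold lowB
  rw [← Finset.add_sum_erase S _ h1]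
  split_ifs with h
  · subst h; simp; omega
  · rw [Finset.sum_insert (by simp [h2])]; omega

lemma hB_low {S : Finset ℕ} (h0 : 0 ∉ S) {i : ℕ} (h1 : i + 1 ∈ S) :
    hB S * (((i + 1 : ℕ) : ℚ) * ∏ y ∈ S.erase (i + 1),
      (((((i + 1 : ℕ) : ℚ) ^ 2 - (i + 1 : ℕ)) - ((y : ℚ) ^ 2 - y) - 2 * y) /
       ((((i + 1 : ℕ) : ℚ) ^ 2 - (i + 1 : ℕ)) - ((y : ℚ) ^ 2 - y))))
    = if i ∈ S then 0 else hB (lowB S i) := by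
  split_ifs with hi
  · rw [Finset.prod_eq_zero (i := i)]
    · simp
    · simp [hi]
    · push_cast
      rw [div_eq_zero_iff]; left; ring
  · set T := S.erase (i + 1) with hT
    have hS : S = insert (i + 1) T := (Finset.insert_erase h1).symm
    have hnT : i + 1 ∉ T := by simp [hT]
    have hlow : hB (lowB S i) = hB T * (1 / (i.factorial : ℚ)) * ∏ y ∈ T, (|(i : ℚ) - y| / (i + y)) := by
      unfold lowB
      split_ifs with h
      · subst h
        rw [Finset.prod_eq_one]
        · simp [hT]
        · intro y hy
          have : y ≠ 0 := by rintro rfl; exact h0 (Finset.mem_of_mem_erase hy)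
          have : (y : ℚ) ≠ 0 := by exact_mod_cast this
          simp [this]
      · rw [← hT, hB_insert]
        simp [hT, hi]
    rw [hlow]
    conv_lhs => rw [hS]
    rw [hB_insert hnT, Nat.factorial_succ]
    have e : (∏ y ∈ T, (|((i + 1 : ℕ) : ℚ) - y| / ((i + 1 : ℕ) + y))) * ∏ y ∈ T,
      (((((i + 1 : ℕ) : ℚ) ^ 2 - (i + 1 : ℕ)) - ((y : ℚ) ^ 2 - y) - 2 * y) /
       ((((i + 1 : ℕ) : ℚ) ^ 2 - (i + 1 : ℕ)) - ((y : ℚ) ^ 2 - y))) = ∏ y ∈ T, (|(i : ℚ) - y| / (i + y)) := by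
      rw [← Finset.prod_mul_distrib]
      apply Finset.prod_congr rfl
      intro y hy
      have hy0 : 0 < y := by
        rcases Nat.eq_zero_or_pos y with rfl | h
        · exact absurd (Finset.mem_of_mem_erase hy) h0
        · exact h
      have hy1 : y ≠ i + 1 := Finset.ne_of_mem_erase hy
      have hy2 : (0:ℚ) < y := by exact_mod_cast hy0
      have hi2 : (0:ℚ) ≤ i := by positivity
      have e1 : (((i + 1 : ℕ) : ℚ) ^ 2 - (i + 1 : ℕ)) - ((y : ℚ) ^ 2 - y) - 2 * y = (i - y) * (i + 1 + y) := by
        push_cast; ring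
      have e2 : (((i + 1 : ℕ) : ℚ) ^ 2 - (i + 1 : ℕ)) - ((y : ℚ) ^ 2 - y) = (i + 1 - y) * (i + y) := by
        push_cast; ring
      rw [e1, e2]
      push_cast
      have n1 : (i:ℚ) + y ≠ 0 := by positivity
      have n2 : (i:ℚ) + 1 + y ≠ 0 := by positivity
      rcases Nat.lt_or_ge y (i + 1) with h | h
      · have h' : (y:ℚ) ≤ i := by exact_mod_cast Nat.le_of_lt_succ h
        have n3 : (i:ℚ) + 1 - y ≠ 0 := by linarith
        rw [abs_of_nonneg (by linarith), abs_of_nonneg (by linarith)]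
        field_simp
      · have h' : (i:ℚ) + 1 < y := by
          have : i + 1 < y := by omega
          exact_mod_cast this
        have n3 : (i:ℚ) + 1 - y ≠ 0 := by linarith
        rw [abs_of_neg (by linarith), abs_of_neg (by linarith)]
        field_simp
    rw [← e]
    have f1 : ((i.factorial : ℕ) : ℚ) ≠ 0 := by positivity
    have f2 : ((i + 1 : ℕ) : ℚ) ≠ 0 := by positivity
    rw [Nat.cast_mul]
    generalize (∏ y ∈ T, (|((i + 1 : ℕ) : ℚ) - y| / ((i + 1 : ℕ) + y))) = A
    generalize (∏ y ∈ T, (_ : ℚ)) = B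
    field_simp

lemma hB_rec {S : Finset ℕ} (h0 : 0 ∉ S) {m : ℕ} (hm : ∀ x ∈ S, x ≤ m) :
    ∑ i ∈ Finset.range m, (if i + 1 ∈ S ∧ i ∉ S then hB (lowB S i) else 0) =
      ((∑ x ∈ S, x : ℕ) : ℚ) * hB S := by
  have hinj : Set.InjOn (fun x : ℕ => (x : ℚ) ^ 2 - x) S := by
    intro x hx y hy hxy
    simp only at hxy
    have hx0 : 0 < x := Nat.pos_of_ne_zero (by rintro rfl; exact h0 hx)
    have hy0 : 0 < y := Nat.pos_of_ne_zero (by rintro rfl; exact h0 hy)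
    have hx1 : (1:ℚ) ≤ x := by exact_mod_cast hx0
    have hy1 : (1:ℚ) ≤ y := by exact_mod_cast hy0
    have : ((x:ℚ) - y) * (x + y - 1) = 0 := by linarith
    rcases mul_eq_zero.1 this with h | h
    · have : (x:ℚ) = y := by linarith
      exact_mod_cast this
    · linarith
  have key := lagr_id S (fun x : ℕ => (x : ℚ) ^ 2 - x) (fun x => 2 * (x : ℚ)) hinj
  set F : ℕ → ℚ := fun x => (x : ℚ) * ∏ y ∈ S.erase x,
      ((((x : ℚ) ^ 2 - x) - ((y : ℚ) ^ 2 - y) - 2 * y) / (((x : ℚ) ^ 2 - x) - ((y : ℚ) ^ 2 - y))) with hF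
  have k2 : ∑ x ∈ S, F x = ((∑ x ∈ S, x : ℕ) : ℚ) := by
    have e : ∑ i ∈ S, 2 * (i:ℚ) * ∏ y ∈ S.erase i, ((((i : ℚ) ^ 2 - i) - ((y : ℚ) ^ 2 - y) - 2 * y) /
        (((i : ℚ) ^ 2 - i) - ((y : ℚ) ^ 2 - y))) = 2 * ∑ x ∈ S, F x := by
      rw [Finset.mul_sum]; apply Finset.sum_congr rfl; intro x _; simp only [hF]; ring
    rw [← Finset.mul_sum] at key
    have := e.symm.trans key
    push_cast
    linarith
  rw [← k2, mul_comm, Finset.mul_sum]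
  have e2 : ∑ x ∈ S, hB S * F x = ∑ i ∈ Finset.range m, if i + 1 ∈ S then hB S * F (i + 1) else 0 := by
    rw [← Finset.sum_filter]
    symm
    apply Finset.sum_bij (fun i _ => i + 1)
    · intro i hi; exact (Finset.mem_filter.1 hi).2
    · intro i _ j _ h; omega
    · intro x hx
      have hx0 : 0 < x := Nat.pos_of_ne_zero (by rintro rfl; exact h0 hx)
      have := hm x hx
      refine ⟨x - 1, ?_, by omega⟩
      rw [Finset.mem_filter, Finset.mem_range, Nat.sub_add_cancel hx0]
      exact ⟨by omega, hx⟩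
    · intros; rfl
  rw [e2]
  apply Finset.sum_congr rfl
  intro i _
  by_cases h1 : i + 1 ∈ S
  · rw [if_pos h1]
    simp only [hF]
    rw [hB_low h0 h1]
    by_cases h2 : i ∈ S <;> simp [h1, h2]
  · simp [h1]


/-- Grassmannian element with set `S` of negative values. -/
structure GrB (m : ℕ) (S : Finset ℕ) (w : Equiv.Perm ℤ) : Prop where
  sg : SgB m w
  inc : ∀ x y : ℤ, 0 < x → x < y → y ≤ m → w x < w y
  pos : 0 ∉ S
  neg : ∀ x : ℕ, 0 < x → (x ∈ S ↔ 0 < w⁻¹ (-(x : ℤ)))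

lemma GrB.le {m : ℕ} {S : Finset ℕ} {w : Equiv.Perm ℤ} (g : GrB m S w) {x : ℕ} (hx : x ∈ S) :
    x ≤ m := by
  have hx0 : 0 < x := Nat.pos_of_ne_zero (by rintro rfl; exact g.pos hx)
  have h := (g.neg x hx0).1 hx
  by_contra hc
  have := g.sg.inv.fix (-(x:ℤ)) (by rw [abs_neg, abs_of_pos (by omega)]; omega)
  omega

lemma GrB.not_mem {m : ℕ} {S : Finset ℕ} {w : Equiv.Perm ℤ} (g : GrB m S w) {x : ℕ} (hx0 : 0 < x)
    (hx : x ∉ S) : 0 < w⁻¹ (x : ℤ) := by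
  rw [g.neg x hx0, g.sg.inv.odd] at hx
  have := g.sg.inv.ne_zero (a := (x:ℤ)) (by omega)
  omega

lemma GrB.mem {m : ℕ} {S : Finset ℕ} {w : Equiv.Perm ℤ} (g : GrB m S w) {x : ℕ} (hx : x ∈ S) :
    w⁻¹ (x : ℤ) < 0 := by
  have hx0 : 0 < x := Nat.pos_of_ne_zero (by rintro rfl; exact g.pos hx)
  rw [g.neg x hx0, g.sg.inv.odd] at hx
  omega

lemma GrB.inv_lt {m : ℕ} {S : Finset ℕ} {w : Equiv.Perm ℤ} (g : GrB m S w) {a b : ℤ}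
    (ha : 0 < w⁻¹ a) (hb : 0 < w⁻¹ b) (ham : |a| ≤ m) (hab : a < b) : w⁻¹ a < w⁻¹ b := by
  by_contra hc
  have hne : w⁻¹ a ≠ w⁻¹ b := fun h => by have := w⁻¹.injective h; omega
  have h2 := g.sg.inv.abs_le ham
  rw [_root_.abs_le] at h2
  have := g.inc _ _ hb (by omega) h2.2
  simp at this
  omega

lemma GrB.desc_iff {m : ℕ} {S : Finset ℕ} {w : Equiv.Perm ℤ} (g : GrB m S w) {i : ℕ} (hi : i < m) :
    w⁻¹ (qB i) < w⁻¹ (pB i) ↔ i + 1 ∈ S ∧ i ∉ S := by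
  have hq : qB i = ((i + 1 : ℕ) : ℤ) := by simp [qB]
  have o1 := g.sg.inv.odd ((i + 1 : ℕ) : ℤ)
  have o2 := g.sg.inv.odd (i : ℤ)
  by_cases h0 : i = 0
  · subst h0
    have hp : pB 0 = -((0 + 1 : ℕ) : ℤ) := by simp [pB]
    rw [hp, hq, o1]
    by_cases h1 : 0 + 1 ∈ S
    · have := g.mem h1
      have h2 := g.pos
      simp only [h1, h2, not_false_eq_true, and_self, iff_true]; omega
    · have := g.not_mem (by omega) h1
      simp only [h1, false_and, iff_false]; omega
  · have hp : pB i = (i : ℤ) := by simp [pB, h0]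
    rw [hp, hq]
    by_cases h1 : i + 1 ∈ S
    · have a1 := g.mem h1
      by_cases h2 : i ∈ S
      · have a2 := g.mem h2
        have := g.inv_lt (a := -((i + 1 : ℕ) : ℤ)) (b := -(i : ℤ)) (by omega) (by omega)
          (by rw [abs_neg, abs_of_pos (by omega)]; omega) (by push_cast; omega)
        simp only [h1, h2, not_true_eq_false, and_false, iff_false]; omega
      · have a2 := g.not_mem (by omega) h2
        simp only [h1, h2, not_false_eq_true, and_self, iff_true]; omega
    · have a1 := g.not_mem (by omega) h1
      simp only [h1, false_and, iff_false]
      by_cases h2 : i ∈ S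
      · have a2 := g.mem h2
        omega
      · have a2 := g.not_mem (by omega) h2
        have := g.inv_lt (a := (i : ℤ)) (b := ((i + 1 : ℕ) : ℤ)) (by omega) (by omega)
          (by rw [abs_of_nonneg (by omega)]; omega) (by push_cast; omega)
        omega

lemma sB_apply_neg {i : ℕ} (z : ℤ) : sB i (-z) = -sB i z :=
  (sB_SgB (m := i + 1) (by omega)).odd z

lemma sB_apply' {i : ℕ} (z : ℤ) (hz : 0 < z) :
    sB i z = if z = (i : ℤ) + 1 then pB i else if z = i then (i : ℤ) + 1 else z := by
  rw [sB_eq, rfB_apply (pB_ne i) (qB_ne i) (pB_ne_qB i)]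
  unfold pB qB
  split_ifs <;> omega

lemma GrB.low {m : ℕ} {S : Finset ℕ} {w : Equiv.Perm ℤ} (g : GrB m S w) {i : ℕ} (hi : i < m)
    (h1 : i + 1 ∈ S) (h2 : i ∉ S) : GrB m (lowB S i) (sB i * w) := by
  have hd := (g.desc_iff hi).2 ⟨h1, h2⟩
  refine ⟨(sB_SgB hi).mul g.sg, ?_, ?_, ?_⟩
  · intro x y hx hxy hy
    have t := g.inc x y hx hxy hy
    by_contra hc
    simp only [Equiv.Perm.mul_apply] at hc
    have hne : sB i (w x) ≠ sB i (w y) := fun h => by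
      have := w.injective ((sB i).injective h); omega
    rcases sB_flip (i := i) (g.sg.ne_zero (by omega)) (g.sg.ne_zero (by omega)) t (by omega) with ⟨e1, e2⟩ | ⟨e1, e2⟩
    · rw [← e1, ← e2] at hd; simp at hd; omega
    · have e3 : qB i = -w x := by omega
      have e4 : pB i = -w y := by omega
      rw [e3, e4, g.sg.inv.odd, g.sg.inv.odd] at hd; simp at hd; omega
  · unfold lowB
    have := g.pos
    split_ifs with h <;> simp [this]
    omega
  · intro x hx
    rw [mul_inv_rev, sB_inv, Equiv.Perm.mul_apply, sB_apply_neg, sB_apply' _ (by omega)]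
    by_cases e1 : x = i + 1
    · subst e1
      rw [if_pos (by push_cast; rfl)]
      have a1 := g.mem h1
      by_cases h0 : i = 0
      · subst h0
        have hp : -pB 0 = ((0 + 1 : ℕ) : ℤ) := by simp [pB]
        rw [hp]
        have hl : 0 + 1 ∉ lowB S 0 := by simp [lowB]
        simp only [hl, false_iff]; omega
      · have a2 := g.not_mem (by omega) h2
        have hp : pB i = (i : ℤ) := by simp [pB, h0]
        have hl : i + 1 ∉ lowB S i := by simp [lowB, h0]
        rw [hp, g.sg.inv.odd]
        simp only [hl, false_iff]; omega
    · have e1' : ¬ ((x : ℤ) = (i : ℤ) + 1) := by omega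
      rw [if_neg e1']
      by_cases e2 : x = i
      · subst e2
        have h3 := (g.neg _ (by omega)).1 h1
        push_cast at h3
        have hl : x ∈ lowB S x := by
          unfold lowB
          rw [if_neg (by omega)]; simp
        rw [if_pos rfl]
        simp only [hl, true_iff]
        exact h3
      · have e2' : ¬ ((x : ℤ) = (i : ℤ)) := by omega
        rw [if_neg e2', ← g.neg x hx]
        unfold lowB
        split_ifs with h
        · subst h; simp at e1; simp [e1]
        · simp [e1, e2]

lemma GrB.eq_one {m : ℕ} {w : Equiv.Perm ℤ} (g : GrB m ∅ w) : w = 1 := by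
  have hp : ∀ x : ℕ, 0 < x → 0 < w⁻¹ (x:ℤ) := fun x hx => g.not_mem hx (by simp)
  have hpos : ∀ x : ℤ, 0 < x → 0 < w x := by
    intro x hx
    by_contra hc
    have hn := g.sg.ne_zero (a := x) (by omega)
    obtain ⟨y, hy⟩ : ∃ y : ℕ, (y:ℤ) = -w x := ⟨(-w x).toNat, by omega⟩
    have := hp y (by omega)
    rw [hy, g.sg.inv.odd] at this
    simp at this; omega
  have lo : ∀ k : ℕ, 0 < k → k ≤ m → (k:ℤ) ≤ w k := by
    intro k
    induction k with
    | zero => intro h; omega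
    | succ k ih =>
      intro _ hk
      rcases Nat.eq_zero_or_pos k with rfl | h
      · have := hpos 1 (by omega)
        simp only [zero_add, Nat.cast_one]; omega
      · have t := g.inc k (k+1) (by omega) (by omega) (by omega)
        have := ih h (by omega)
        push_cast; omega
  have hi : ∀ k : ℕ, k < m → w ((m - k : ℕ) : ℤ) ≤ ((m - k : ℕ) : ℤ) := by
    intro k
    induction k with
    | zero =>
      intro h
      have := g.sg.abs_le (a := (m:ℤ)) (by rw [abs_of_nonneg (by omega)])
      rw [_root_.abs_le] at this
      simpa using this.2
    | succ k ih =>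
      intro hk
      have t := g.inc ((m - (k+1) : ℕ) : ℤ) ((m - k : ℕ) : ℤ) (by omega) (by omega) (by omega)
      have := ih (by omega)
      omega
  have hfix : ∀ x : ℤ, 0 < x → w x = x := by
    intro x hx
    by_cases h : x ≤ m
    · have a := lo x.toNat (by omega) (by omega)
      have b := hi (m - x.toNat) (by omega)
      rw [show (m - (m - x.toNat) : ℕ) = x.toNat by omega] at b
      rw [Int.toNat_of_nonneg hx.le] at a b
      omega
    · exact g.sg.fix x (by rw [abs_of_pos hx]; omega)
  ext x
  simp only [Equiv.Perm.one_apply]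
  rcases lt_trichotomy x 0 with h | h | h
  · have := hfix (-x) (by omega)
    rw [g.sg.odd] at this; omega
  · rw [h, g.sg.zero]
  · exact hfix x h

lemma len2_one (m : ℕ) : len2 m 1 = 0 := by
  unfold len2
  apply Finset.sum_eq_zero
  intro d _
  rw [if_neg]
  simp only [Equiv.Perm.one_apply]; omega

theorem gr_count {m : ℕ} (N : ℕ) : ∀ (S : Finset ℕ) (w : Equiv.Perm ℤ), ∑ x ∈ S, x = N →
    GrB m S w → len2 m w = 2 * N ∧ (cw m N w : ℚ) = N.factorial * hB S := by
  induction N with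
  | zero =>
    intro S w hS g
    have hS0 : S = ∅ := by
      rw [Finset.eq_empty_iff_forall_notMem]
      intro x hx
      have := (Finset.sum_eq_zero_iff.1 hS) x hx
      subst this; exact g.pos hx
    subst hS0
    have := g.eq_one
    subst this
    refine ⟨len2_one m, ?_⟩
    have : cw m 0 1 = 1 := by
      unfold cw
      rw [Finset.card_eq_one]
      refine ⟨[], ?_⟩
      ext l
      simp only [Finset.mem_filter, mem_wlB, Finset.mem_singleton, List.length_eq_zero_iff]
      constructor
      · rintro ⟨⟨h, _⟩, _⟩; exact h
      · rintro rfl; simp [wordProd]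
    rw [this]; simp [hB]
  | succ N ih =>
    intro S w hS g
    have hlen : len2 m w = 2 * (N + 1) := by
      have hne : S.Nonempty := by
        rw [Finset.nonempty_iff_ne_empty]; rintro rfl; simp at hS
      set x := S.min' hne with hx
      have hxS : x ∈ S := S.min'_mem hne
      have hx0 : 0 < x := Nat.pos_of_ne_zero (by intro h; rw [h] at hxS; exact g.pos hxS)
      obtain ⟨i, hi⟩ : ∃ i, x = i + 1 := ⟨x - 1, by omega⟩
      have hiS : i ∉ S := fun h => by have := S.min'_le i h; omega
      rw [hi] at hxS
      have him : i < m := g.le hxS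
      have h1 := (ih _ _ (by have := sum_lowB hxS hiS; omega) (g.low him hxS hiS)).1
      have h2 := len2_s_desc g.sg him ((g.desc_iff him).2 ⟨hxS, hiS⟩)
      omega
    refine ⟨hlen, ?_⟩
    rw [cw_succ, Nat.cast_sum]
    have : ∀ i ∈ Finset.range m, (cw m N (sB i * w) : ℚ) =
        N.factorial * (if i + 1 ∈ S ∧ i ∉ S then hB (lowB S i) else 0) := by
      intro i hi
      have hi' := Finset.mem_range.1 hi
      by_cases h : i + 1 ∈ S ∧ i ∉ S
      · rw [if_pos h]
        exact (ih _ _ (by have := sum_lowB h.1 h.2; omega) (g.low hi' h.1 h.2)).2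
      · rw [if_neg h, mul_zero]
        have hd := (g.desc_iff hi').not.2 h
        have ha := (asc_or_desc w i).resolve_right hd
        have := len2_s_asc g.sg hi' ha
        rw [cw_eq_zero ((sB_SgB hi').mul g.sg) (by omega)]; simp
    rw [Finset.sum_congr rfl this, ← Finset.mul_sum, hB_rec g.pos (fun x hx => g.le hx), hS,
      Nat.factorial_succ]
    push_cast; ring

lemma StB.gr {m K : ℕ} {P : ℤ → Prop} {w : Equiv.Perm ℤ} (st : StB m K 0 P w) (S : Finset ℕ)
    (h0 : 0 ∉ S) (hS : ∀ x : ℕ, 0 < x → (x ∈ S ↔ P x)) : GrB m S w := by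
  refine ⟨st.sg, st.tail, h0, ?_⟩
  intro x hx
  rw [hS x hx, st.neg x (by omega)]
  constructor
  · rintro ⟨i, hi, h⟩
    rw [← h]; simpa using hi
  · intro h
    exact ⟨_, h, by simp⟩


lemma len2_even {m : ℕ} {w : Equiv.Perm ℤ} (h : SgB m w) : ∃ K, len2 m w = 2 * K := by
  suffices hz : ((len2 m w : ℕ) : ZMod 2) = 0 by
    rw [ZMod.natCast_eq_zero_iff] at hz
    obtain ⟨K, hK⟩ := hz
    exact ⟨K, hK⟩
  unfold len2
  rw [Nat.cast_sum]
  apply Finset.sum_involution (fun d _ => (-d.2, -d.1))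
  · rintro ⟨a, b⟩ _
    have e : (if ((-b, -a) : ℤ × ℤ).1 < ((-b, -a) : ℤ × ℤ).2 ∧
        w ((-b, -a) : ℤ × ℤ).2 < w ((-b, -a) : ℤ × ℤ).1 then wtB (-b, -a) else 0) =
        if a < b ∧ w b < w a then wtB (a, b) else 0 := by
      simp only [h.odd]
      have e2 : wtB (-b, -a) = wtB (a, b) := by
        unfold wtB; congr 1; simp only; apply propext; omega
      rw [e2]
      congr 1
      apply propext; omega
    rw [e, ← Nat.cast_add]
    rw [ZMod.natCast_eq_zero_iff]
    exact ⟨_, (two_mul _).symm⟩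
  · rintro ⟨a, b⟩ _ hne he
    apply hne
    simp only [Prod.mk.injEq] at he
    have : wtB (a, b) = 2 := by unfold wtB; rw [if_pos]; simp only; omega
    rw [this]
    split_ifs
    · decide
    · simp
  · rintro ⟨a, b⟩ _; simp
  · rintro ⟨a, b⟩ hd
    rw [mem_PB] at hd ⊢
    simpa [and_comm] using hd

lemma SgB.mono {n m : ℕ} (hnm : n ≤ m) {w : Equiv.Perm ℤ} (h : SgB n w) : SgB m w :=
  ⟨h.odd, fun a ha => h.fix a (by omega)⟩

lemma length_ge {m K : ℕ} {w : Equiv.Perm ℤ} (h : SgB m w) (hK : len2 m w = 2 * K) {l : List ℕ}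
    (hl : ∀ i ∈ l, i < m) (hw : wordProd l = w) : K ≤ l.length := by
  classical
  by_contra hc
  have := cw_eq_zero (k := l.length) h (by omega)
  unfold cw at this
  rw [Finset.card_eq_zero, Finset.filter_eq_empty_iff] at this
  exact this (mem_wlB.2 ⟨rfl, hl⟩) hw

lemma letters_lt {n m : ℕ} (hnm : n ≤ m) (l : List ℕ) : ∀ (w : Equiv.Perm ℤ), SgB n w →
    len2 m w = 2 * l.length → (∀ i ∈ l, i < m) → wordProd l = w → ∀ i ∈ l, i < n := by
  induction l with
  | nil => intro w _ _ _ _ i hi; simp at hi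
  | cons i l ih =>
    intro w h hlen hl hw
    have hm := h.mono hnm
    have him : i < m := hl i (by simp)
    have hl' : ∀ j ∈ l, j < m := fun j hj => hl j (by simp [hj])
    rw [wordProd_cons] at hw
    have hw' : wordProd l = sB i * w := by rw [← hw, sB_mul_mul]
    simp only [List.length_cons] at hlen
    obtain ⟨K, hK⟩ := len2_even ((sB_SgB him).mul hm)
    have hge := length_ge ((sB_SgB him).mul hm) hK hl' hw'
    rcases asc_or_desc w i with ha | ha
    · have := len2_s_asc hm him ha; omega
    · have hd := len2_s_desc hm him ha
      have hin : i < n := by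
        by_contra hc
        have hq : w⁻¹ (qB i) = qB i := h.inv.fix _ (by unfold qB; rw [abs_of_pos] <;> omega)
        rw [hq] at ha
        by_cases h1 : (n : ℤ) < |pB i|
        · have := h.inv.fix _ h1
          have := pB_lt_qB i
          omega
        · have := h.inv.abs_le (a := pB i) (by omega)
          rw [abs_le] at this
          unfold qB at ha
          omega
      intro j hj
      rcases List.mem_cons.1 hj with rfl | hj
      · exact hin
      · exact ih (sB i * w) ((sB_SgB hin).mul h) (by omega) hl' hw' j hj

lemma card_RSet {n m K : ℕ} (hnm : n ≤ m) {w : Equiv.Perm ℤ} (h : SgB n w)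
    (hK : len2 m w = 2 * K) (hpos : 0 < cw m K w) : Nat.card ↥(RSet n w) = cw m K w := by
  classical
  have hm := h.mono hnm
  have key : ∀ l, l ∈ wlB m K → wordProd l = w → ∀ i ∈ l, i < n := by
    intro l hl hw
    rw [mem_wlB] at hl
    exact letters_lt hnm l w h (by rw [hl.1, hK]) hl.2 hw
  have e : RSet n w = ↑((wlB m K).filter fun l => wordProd l = w) := by
    ext l
    simp only [Finset.coe_filter, Set.mem_ofPred_eq, RSet, IsReducedWord]
    constructor
    · rintro ⟨h1, h2, h3⟩
      refine ⟨mem_wlB.2 ⟨?_, fun i hi => (h1 i hi).trans_le hnm⟩, h2⟩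
      have g1 := length_ge hm hK (fun i hi => (h1 i hi).trans_le hnm) h2
      unfold cw at hpos
      obtain ⟨l0, hl0⟩ := Finset.card_pos.1 hpos
      rw [Finset.mem_filter] at hl0
      have := h3 l0 (key l0 hl0.1 hl0.2) hl0.2
      have := (mem_wlB.1 hl0.1).1
      omega
    · rintro ⟨h1, h2⟩
      refine ⟨key l h1 h2, h2, ?_⟩
      intro l' h3 h4
      rw [(mem_wlB.1 h1).1]
      exact length_ge hm hK (fun i hi => (h3 i hi).trans_le hnm) h4
  rw [e, Nat.card_coe_set_eq, Set.ncard_coe_finset]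
  unfold cw
  congr!

lemma card_of_gr {n m K : ℕ} (hnm : n ≤ m) {w w' : Equiv.Perm ℤ} (h : SgB n w)
    (hK : len2 m w = 2 * K) (hK' : len2 m w' = 2 * K) (hc : cw m K w' = cw m K w) {S : Finset ℕ}
    (g : GrB m S w') :
    (Nat.card ↥(RSet n w) : ℚ) = (∑ x ∈ S, x).factorial * hB S := by
  obtain ⟨g1, g2⟩ := gr_count _ S w' rfl g
  have : ∑ x ∈ S, x = K := by omega
  rw [this] at g2 ⊢
  have hp : 0 < cw m K w := by
    have := hB_pos S
    have f : (0:ℚ) < K.factorial := by positivity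
    have : (0:ℚ) < cw m K w' := by rw [g2]; positivity
    rw [← hc]; exact_mod_cast this
  rw [card_RSet hnm h hK hp, ← hc, g2]

lemma start_st {n : ℕ} (hn : 1 ≤ n) {w : Equiv.Perm ℤ} (h : SgB n w) {K : ℕ}
    (hK : len2 (2 * n) w = 2 * K) (hpre : ∀ i : ℤ, 0 < i → i < n → w i = i ∨ w i = -i) :
    StB (2 * n) K n (fun _ => False) w := by
  have hf : ∀ x : ℤ, (n : ℤ) < x → w x = x := fun x hx => h.fix x (by rw [abs_of_pos] <;> omega)
  refine ⟨h.mono (by omega), hf _ (by push_cast; omega), hK, ?_, hpre, ?_⟩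
  · intro x y hx hxy _
    rw [hf x hx, hf y (by omega)]; exact hxy
  · intro x hx
    refine ⟨fun h => h.elim, ?_⟩
    rintro ⟨i, hi, h⟩
    rw [hf i hi] at h; omega

/-- negative values for the first element -/
def S1B (N : ℕ) : Finset ℕ := (Finset.range N).image fun j => 2 * j + 5

lemma mem_S1B {N x : ℕ} : x ∈ S1B N ↔ 5 ≤ x ∧ x < 5 + 2 * N ∧ (x - 5) % 2 = 0 := by
  unfold S1B
  simp only [Finset.mem_image, Finset.mem_range]
  constructor
  · rintro ⟨j, hj, rfl⟩; omega
  · rintro ⟨h1, h2, h3⟩; exact ⟨(x - 5) / 2, by omega, by omega⟩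

lemma inj_S1B (N : ℕ) : Set.InjOn (fun j : ℕ => 2 * j + 5) (Finset.range N) := by
  intro a _ b _ h
  simp only at h; omega

lemma sum_S1B (N : ℕ) : ∑ x ∈ S1B N, x = N ^ 2 + 4 * N := by
  unfold S1B
  rw [Finset.sum_image (inj_S1B N)]
  induction N with
  | zero => simp
  | succ N ih => rw [Finset.sum_range_succ, ih]; ring

lemma prod3_S1B (N : ℕ) : ∏ y ∈ S1B N, (|((3 : ℕ) : ℚ) - y| / ((3 : ℕ) + y)) =
    6 / ((N + 1) * (N + 2) * (N + 3)) := by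
  unfold S1B
  rw [Finset.prod_image (inj_S1B N)]
  induction N with
  | zero => norm_num
  | succ N ih =>
    rw [Finset.prod_range_succ, ih]
    have : (0:ℚ) ≤ N := by positivity
    push_cast
    rw [abs_of_neg (by linarith)]
    field_simp
    ring

lemma prod1_S1B (N : ℕ) : ∏ y ∈ S1B N, (|((1 : ℕ) : ℚ) - y| / ((1 : ℕ) + y)) =
    2 / (N + 2) := by
  unfold S1B
  rw [Finset.prod_image (inj_S1B N)]
  induction N with
  | zero => norm_num
  | succ N ih =>
    rw [Finset.prod_range_succ, ih]
    have : (0:ℚ) ≤ N := by positivity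
    push_cast
    rw [abs_of_neg (by linarith)]
    field_simp
    ring

lemma ratio (N : ℕ) :
    ((∑ x ∈ insert 1 (insert 3 (S1B N)), x).factorial : ℚ) * hB (insert 1 (insert 3 (S1B N))) =
    ((N : ℚ) ^ 2 + 4 * N + 2) * (N ^ 2 + 4 * N + 1) *
      ((∑ x ∈ S1B N, x).factorial * hB (S1B N)) := by
  have h3 : 3 ∉ S1B N := by rw [mem_S1B]; omega
  have h1 : 1 ∉ insert 3 (S1B N) := by rw [Finset.mem_insert, mem_S1B]; omega
  rw [Finset.sum_insert h1, Finset.sum_insert h3, hB_insert h1, hB_insert h3, Finset.prod_insert h3,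
    prod3_S1B, prod1_S1B, sum_S1B]
  rw [show 1 + (3 + (N ^ 2 + 4 * N)) = N ^ 2 + 4 * N + 1 + 1 + 1 + 1 by ring]
  simp only [Nat.factorial_succ (N ^ 2 + 4 * N + 1 + 1 + 1), Nat.factorial_succ (N ^ 2 + 4 * N + 1 + 1),
    Nat.factorial_succ (N ^ 2 + 4 * N + 1), Nat.factorial_succ (N ^ 2 + 4 * N)]
  generalize ((N ^ 2 + 4 * N).factorial) = F
  rw [show Nat.factorial 1 = 1 from rfl, show Nat.factorial 3 = 6 from rfl]
  push_cast
  rw [abs_of_neg (by norm_num)]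
  generalize hB (S1B N) = H
  field_simp
  ring

theorem main_thm (n : ℕ) (hn : 2 ≤ n)
    (w : Equiv.Perm ℤ) (hw : ∀ i : ℤ, w i = wpFun n i) :
    Nat.card ↥(RSet n (w0B n))
      = (n ^ 2 - 2) * (n ^ 2 - 3) * Nat.card ↥(RSet n w) := by
  obtain ⟨N, rfl⟩ : ∃ N, n = N + 2 := ⟨n - 2, by omega⟩
  set n := N + 2 with hnN
  have h0 : ∀ i, w0B n i = w0BFun n i := fun i => rfl
  have g0 : SgB n (w0B n) := by
    constructor
    · intro a; rw [h0, h0]; unfold w0BFun; split_ifs <;> omega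
    · intro a ha; rw [h0]; unfold w0BFun; rw [if_neg]; rw [lt_abs] at ha; omega
  have g1 : SgB n w := by
    constructor
    · intro a; rw [hw, hw]; unfold wpFun; split_ifs <;> omega
    · intro a ha; rw [hw]; unfold wpFun; rw [if_neg]; rw [lt_abs] at ha; omega
  obtain ⟨K0, hK0⟩ := len2_even (g0.mono (show n ≤ 2 * n by omega))
  obtain ⟨K1, hK1⟩ := len2_even (g1.mono (show n ≤ 2 * n by omega))
  have c0 : (Nat.card ↥(RSet n (w0B n)) : ℚ) =
      (∑ x ∈ insert 1 (insert 3 (S1B N)), x).factorial * hB (insert 1 (insert 3 (S1B N))) := by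
    have st := start_st (by omega) g0 hK0 (fun i h1 h2 => by
      right; rw [h0]; unfold w0BFun; rw [if_pos (by omega)])
    obtain ⟨w', s1, q1, _⟩ := stagesA rfl n le_rfl st (fun i h1 h2 => by
      rw [h0]; unfold w0BFun; rw [if_pos (by omega)])
    rw [sub_self] at s1
    refine card_of_gr (by omega) g0 hK0 s1.len q1 (s1.gr _ ?_ ?_)
    · simp only [Finset.mem_insert, mem_S1B]; omega
    · intro x hx
      simp only [Finset.mem_insert, mem_S1B]; omega
  have c1 : (Nat.card ↥(RSet n w) : ℚ) = (∑ x ∈ S1B N, x).factorial * hB (S1B N) := by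
    have st := start_st (by omega) g1 hK1 (fun i h1 h2 => by
      rw [hw]; unfold wpFun; split_ifs <;> omega)
    obtain ⟨w1, s1, q1, v1⟩ := stagesA rfl N (by omega) st (fun i h1 h2 => by
      rw [hw]; unfold wpFun; rw [if_pos (by omega)])
    have e : (n : ℤ) - N = 2 := by omega
    rw [e] at s1 v1
    have s1' := s1.congr (T := fun x => 3 ≤ x ∧ x < 3 + 2 * (N : ℤ) ∧ (x - 3) % 2 = 0)
      (by intro x _; omega)
    obtain ⟨w2, s2, q2, v2⟩ := stageB (by omega) (by omega) (by push_cast; omega) s1' (by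
      rw [v1 2 (by omega) (by omega), hw]; unfold wpFun; rw [if_neg (by omega)])
    rw [show (2:ℤ) - 1 = 1 by norm_num] at s2
    obtain ⟨w3, s3, q3, _⟩ := stageB (by omega) (by omega) (by push_cast; omega) s2 (by
      rw [v2 1 (by omega) (by omega), v1 1 (by omega) (by omega), hw]; unfold wpFun; rw [if_neg (by omega)])
    rw [sub_self] at s3
    refine card_of_gr (by omega) g1 hK1 s3.len (q3.trans (q2.trans q1)) (s3.gr _ ?_ ?_)
    · rw [mem_S1B]; omega
    · intro x hx
      rw [mem_S1B]; omega
  have r := ratio N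
  rw [← c0, ← c1] at r
  have e2 : n ^ 2 - 2 = N ^ 2 + 4 * N + 2 := by
    have : n ^ 2 = N ^ 2 + 4 * N + 2 + 2 := by rw [hnN]; ring
    omega
  have e3 : n ^ 2 - 3 = N ^ 2 + 4 * N + 1 := by
    have : n ^ 2 = N ^ 2 + 4 * N + 1 + 3 := by rw [hnN]; ring
    omega
  rw [e2, e3]
  exact_mod_cast r


/-- For every `n ≥ 2`, with `w = w' ∈ Bₙ`, `|R(w₀ᴮ)| = (n² - 2)(n² - 3) · |R(w')|`. -/
theorem card_Rw0B_eq (n : ℕ) (hn : 2 ≤ n)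
    (w : Equiv.Perm ℤ) (hw : ∀ i : ℤ, w i = wpFun n i) :
    Nat.card ↥(RSet n (w0B n))
      = (n ^ 2 - 2) * (n ^ 2 - 3) * Nat.card ↥(RSet n w) := by
  exact main_thm n hn w hw
end

section
/- For every integer n ≥ 3, the rational numbers C_1, …, C_{n−2} defined below satisfy Σ_{k=1}^{n−2} C_k = 3n(n² − 1)(n − 2). -/
/-- The rational number `C_k` (depending on `n`):
`C_k = [3·5⋯(2k+3)]/[2·4⋯(2k)] · [3·5⋯(2n-2k-1)]/[2·4⋯(2n-2k-4)]
       · [(2k+4)(2k+6)⋯(4k+4)]/[(2k+1)(2k+3)⋯(4k+1)]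
       · [(4k+8)(4k+10)⋯(2n+2k+2)]/[(4k+5)(4k+7)⋯(2n+2k-1)]`,
where empty products equal `1`. -/
def C (n k : ℕ) : ℚ :=
  ((∏ j ∈ Finset.Icc 1 (k + 1), (2 * (j : ℚ) + 1)) /
      (∏ j ∈ Finset.Icc 1 k, (2 * (j : ℚ)))) *
  ((∏ j ∈ Finset.Icc 1 (n - k - 1), (2 * (j : ℚ) + 1)) /
      (∏ j ∈ Finset.Icc 1 (n - k - 2), (2 * (j : ℚ)))) *
  ((∏ j ∈ Finset.Icc (k + 2) (2 * k + 2), (2 * (j : ℚ))) /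
      (∏ j ∈ Finset.Icc k (2 * k), (2 * (j : ℚ) + 1))) *
  ((∏ j ∈ Finset.Icc (2 * k + 4) (n + k + 1), (2 * (j : ℚ))) /
      (∏ j ∈ Finset.Icc (2 * k + 2) (n + k - 1), (2 * (j : ℚ) + 1)))

def EE (m : ℕ) : ℚ := ∏ j ∈ Finset.Icc 1 m, (2 * (j : ℚ))
def OO (m : ℕ) : ℚ := ∏ j ∈ Finset.Icc 1 m, (2 * (j : ℚ) + 1)

lemma EE_succ (m : ℕ) : EE (m + 1) = EE m * (2 * (m + 1)) := by
  unfold EE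
  rw [Finset.prod_Icc_succ_top (by omega)]
  push_cast; ring

lemma OO_succ (m : ℕ) : OO (m + 1) = OO m * (2 * m + 3) := by
  unfold OO
  rw [Finset.prod_Icc_succ_top (by omega)]
  push_cast; ring

lemma EE_ne (m : ℕ) : EE m ≠ 0 := by
  unfold EE
  refine Finset.prod_ne_zero_iff.mpr fun j hj => ?_
  have : 0 < j := by simp at hj; omega
  positivity

lemma OO_ne (m : ℕ) : OO m ≠ 0 := by
  unfold OO
  refine Finset.prod_ne_zero_iff.mpr fun j hj => ?_
  positivity

lemma prodE (a d : ℕ) : ∏ j ∈ Finset.Icc (a + 1) (a + d), (2 * (j : ℚ)) = EE (a + d) / EE a := by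
  have ha := EE_ne a
  induction d with
  | zero => simp [ha]
  | succ d ih =>
    rw [← add_assoc, Finset.prod_Icc_succ_top (by omega), ih, EE_succ]
    push_cast; field_simp

lemma prodO (a d : ℕ) :
    ∏ j ∈ Finset.Icc (a + 1) (a + d), (2 * (j : ℚ) + 1) = OO (a + d) / OO a := by
  have ha := OO_ne a
  induction d with
  | zero => simp [ha]
  | succ d ih =>
    rw [← add_assoc, Finset.prod_Icc_succ_top (by omega), ih, OO_succ]
    push_cast; field_simp; ring

lemma C_form (k d : ℕ) : C (k + 2 + d) k =
    (OO (k + 1) / EE k) * (OO (d + 1) / EE d) *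
    ((EE (2 * k + 2) / EE (k + 1)) / ((2 * k + 1) * (OO (2 * k) / OO k))) *
    ((EE (2 * k + 3 + d) / EE (2 * k + 3)) / (OO (2 * k + 1 + d) / OO (2 * k + 1))) := by
  have h1 := prodE (k + 1) (k + 1)
  have h2 := prodO k k
  have h3 := prodE (2 * k + 3) d
  have h4 := prodO (2 * k + 1) d
  have h5 : ∏ j ∈ Finset.Icc k (2 * k), (2 * (j : ℚ) + 1) =
      (2 * k + 1) * ∏ j ∈ Finset.Icc (k + 1) (2 * k), (2 * (j : ℚ) + 1) := by
    rw [← Finset.mul_prod_Ioc_eq_prod_Icc (by omega)]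
    congr 1
    refine Finset.prod_congr ?_ fun _ _ => rfl
    ext x; simp
  rw [show k + 1 + (k + 1) = 2 * k + 2 by ring] at h1
  rw [show k + k = 2 * k by ring] at h2
  unfold C
  rw [show k + 2 + d - k - 1 = d + 1 by omega, show k + 2 + d - k - 2 = d by omega,
    show k + 2 + d + k + 1 = 2 * k + 3 + d by omega,
    show k + 2 + d + k - 1 = 2 * k + 1 + d by omega, h5, h2, h4, h3, h1]
  rfl

lemma C_n (k d : ℕ) : C (k + 3 + d) k * ((d + 1) * (4 * k + 2 * d + 5)) =
    C (k + 2 + d) k * ((2 * d + 5) * (2 * k + d + 4)) := by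
  rw [show k + 3 + d = k + 2 + (d + 1) by ring, C_form, C_form]
  simp only [← add_assoc, EE_succ, OO_succ]
  have := EE_ne k
  have := EE_ne d
  have := EE_ne (2 * k)
  have := OO_ne k
  have := OO_ne (2 * k)
  have := OO_ne (2 * k + 1 + d)
  have := EE_ne (2 * k + 3 + d)
  push_cast
  have : (2 * (2 * (k:ℚ) + 1 + d) + 3) ≠ 0 := by positivity
  field_simp
  ring

lemma C_k (k d : ℕ) : C (k + 3 + d) (k + 1) *
      ((k + 1) * (k + 2) * (2 * d + 5) * (4 * k + 3) * (4 * k + 2 * d + 7)) =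
    C (k + 3 + d) k * ((d + 1) * (2 * k + d + 5) * (2 * k + 1) * (2 * k + 3) * (4 * k + 7)) := by
  rw [show C (k + 3 + d) (k + 1) = C (k + 1 + 2 + d) (k + 1) by
      rw [show k + 3 + d = k + 1 + 2 + d by ring],
   show C (k + 3 + d) k = C (k + 2 + (d + 1)) k by
      rw [show k + 3 + d = k + 2 + (d + 1) by ring], C_form, C_form]
  rw [show 2 * (k + 1) + 3 + d = 2 * k + 3 + d + 1 + 1 by ring,
    show 2 * (k + 1) + 1 + d = 2 * k + 1 + d + 1 + 1 by ring]
  simp only [show 2 * (k + 1) = 2 * k + 1 + 1 by ring]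
  simp only [← add_assoc, EE_succ, OO_succ]
  have := EE_ne k
  have := EE_ne d
  have := EE_ne (2 * k)
  have := OO_ne k
  have := OO_ne d
  have := OO_ne (2 * k)
  have := OO_ne (2 * k + 1 + d)
  have := EE_ne (2 * k + 3 + d)
  push_cast
  have : (2 * (2 * (k:ℚ) + 1 + d) + 3) ≠ 0 := by positivity
  have : (2 * (2 * (k:ℚ) + 1 + d + 1) + 3) ≠ 0 := by positivity
  field_simp
  ring

/-- Telescoping certificate. -/
def HH (n k : ℕ) : ℚ :=
  -((2 * n + 1) * k * (k + 1) * (2 * n - 2 * k + 1)) / ((4 * k + 3) * (n - k - 1)) * C n k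

lemma step (k d : ℕ) : (k + 3 + d : ℚ) * (k + 2 + d) * C (k + 4 + d) k
    - (k + 4 + d) * (k + 5 + d) * C (k + 3 + d) k = HH (k + 3 + d) (k + 1) - HH (k + 3 + d) k := by
  have h1 := C_n k (d + 1)
  have h2 := C_k k d
  rw [show k + 3 + (d + 1) = k + 4 + d by ring, show k + 2 + (d + 1) = k + 3 + d by ring] at h1
  unfold HH
  push_cast at *
  rw [← eq_div_iff (by positivity)] at h1 h2
  rw [h1, h2, show (k + 3 + d - (k + 1) - 1 : ℚ) = d + 1 by ring,
    show (k + 3 + d - k - 1 : ℚ) = d + 2 by ring]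
  have : (4 * ((k:ℚ) + 1) + 3) ≠ 0 := by positivity
  have : (4 * (k:ℚ) + 7) ≠ 0 := by positivity
  have : (d + 1 + 1 : ℚ) ≠ 0 := by positivity
  have : (d + 2 : ℚ) ≠ 0 := by positivity
  have : (4 * k + 2 * (d + 1) + 5 : ℚ) ≠ 0 := by positivity
  have : (4 * k + 2 * d + 7 : ℚ) ≠ 0 := by positivity
  field_simp
  ring

lemma partialSum (n m : ℕ) (h : m + 2 ≤ n) :
    ∑ k ∈ Finset.range m, ((n : ℚ) * (n - 1) * C (n + 1) k - (n + 1) * (n + 2) * C n k)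
      = HH n m := by
  induction m with
  | zero => simp [HH]
  | succ m ih =>
    rw [Finset.sum_range_succ, ih (by omega)]
    obtain ⟨d, rfl⟩ : ∃ d, n = m + 3 + d := ⟨n - m - 3, by omega⟩
    have := step m d
    rw [show m + 3 + d + 1 = m + 4 + d by ring]
    push_cast
    linear_combination this

lemma fullSum (m : ℕ) : ∑ k ∈ Finset.range (m + 1), C (m + 2) k =
    3 * (m + 2 : ℚ) ^ 2 * ((m + 2 : ℚ) ^ 2 - 1) := by
  induction m with
  | zero => simp [C]; norm_num [Finset.prod_Icc_succ_top]
  | succ m ih =>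
    have h := partialSum (m + 2) m le_rfl
    rw [Finset.sum_sub_distrib, ← Finset.mul_sum, ← Finset.mul_sum] at h
    rw [Finset.sum_range_succ] at ih
    rw [Finset.sum_range_succ, Finset.sum_range_succ]
    have h1 := C_n m 0
    have h2 := C_k m 0
    unfold HH at h
    simp only [add_zero, show m + 2 + 1 = m + 3 by ring, show m + 1 + 2 = m + 3 by ring] at *
    push_cast at *
    rw [← eq_div_iff (by positivity)] at h1 h2
    have key : ((m:ℚ) + 2) * (m + 1) * (C (m + 3) m + C (m + 3) (m + 1))
       - (m + 3) * (m + 4) * C (m + 2) m + (-((2 * (m + 2) + 1) * m * (m + 1) * (2 * (m + 2) - 2 * m + 1)) / ((4 * m + 3) * (m + 2 - m - 1)) * C (m + 2) m) = 0 := by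
      rw [h2, h1, show (m + 2 - m - 1 : ℚ) = 1 by ring]
      have : (4 * m + 2 * 0 + 7 : ℚ) ≠ 0 := by positivity
      have : (4 * m + 2 * 0 + 5 : ℚ) ≠ 0 := by positivity
      field_simp
      ring
    have hne : ((m:ℚ) + 2) * (m + 1) ≠ 0 := by positivity
    apply mul_left_cancel₀ hne
    linear_combination h + key + ((m:ℚ) + 3) * (m + 4) * ih

lemma C_zero (m : ℕ) : C (m + 2) 0 = 6 * (m + 2 : ℚ) * ((m + 2 : ℚ) ^ 2 - 1) := by
  induction m with
  | zero => simp [C]; norm_num [Finset.prod_Icc_succ_top]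
  | succ m ih =>
    have h := C_n 0 m
    simp only [zero_add, show 2 + m = m + 2 by ring, show 3 + m = m + 1 + 2 by ring] at h
    rw [ih] at h
    push_cast at *
    have hne : ((m:ℚ) + 1) * (4 * 0 + 2 * m + 5) ≠ 0 := by positivity
    apply mul_right_cancel₀ hne
    rw [h]
    ring

theorem sum_C_eq (n : ℕ) (hn : 3 ≤ n) :
    ∑ k ∈ Finset.Icc 1 (n - 2), C n k
      = 3 * (n : ℚ) * ((n : ℚ) ^ 2 - 1) * ((n : ℚ) - 2) := by
  obtain ⟨m, rfl⟩ : ∃ m, n = m + 2 := ⟨n - 2, by omega⟩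
  have h := fullSum m
  rw [Finset.range_eq_Ico, Finset.sum_eq_sum_Ico_succ_bot (by omega), C_zero] at h
  have e : Finset.Icc 1 (m + 2 - 2) = Finset.Ico (0 + 1) (m + 1) := by
    rfl
  rw [e]
  push_cast
  linear_combination h
end

section
/- For every integer n ≥ 2, the terminating well-poised hypergeometric sum satisfies Σ_{k=0}^{n−2} [(3/2)_k (7/4)_k (1/2)_k (2−n)_k (2+n)_k] / [(3/4)_k (2)_k (n+1/2)_k (1/2−n)_k k!] = n/2, where all terms are rational numbers. -/
/-- The rising factorial (Pochhammer symbol) `(a)_k = a(a+1)⋯(a+k-1)`, with `(a)_0 = 1`. -/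
def poch (a : ℚ) (k : ℕ) : ℚ := ∏ j ∈ Finset.range k, (a + (j : ℚ))

/-- The summand. -/
def dsT (x : ℚ) (k : ℕ) : ℚ :=
  (poch (3 / 2) k * poch (7 / 4) k * poch (1 / 2) k *
      poch (2 - x) k * poch (2 + x) k) /
    (poch (3 / 4) k * poch 2 k * poch (x + 1 / 2) k *
      poch (1 / 2 - x) k * (Nat.factorial k : ℚ))

/-- Ratio of consecutive summands. -/
def dsS (x k : ℚ) : ℚ :=
  ((3 / 2 + k) * (7 / 4 + k) * (1 / 2 + k) * (2 - x + k) * (2 + x + k)) /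
    ((3 / 4 + k) * (2 + k) * (x + 1 / 2 + k) * (1 / 2 - x + k) * (k + 1))

/-- Ratio of summands at `x + 1` and `x`. -/
def dsR (x k : ℚ) : ℚ :=
  ((x - 1) * (x + 2 + k) * (k - 1 / 2 - x)) /
    ((1 - x + k) * (x + 2) * (x + 1 / 2 + k))

/-- The WZ certificate. -/
def dsC (x k : ℚ) : ℚ :=
  -(2 * (2 * x + 1) * k * (k + 1) * (k - x - 1 / 2)) /
    ((x + 1) * (x + 2) * (4 * k + 3) * (k - x + 1) * x)

theorem dsT_zero (x : ℚ) : dsT x 0 = 1 := by simp [dsT, poch]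

theorem dsT_succ (x : ℚ) (k : ℕ) : dsT x (k + 1) = dsT x k * dsS x k := by
  unfold dsT dsS poch
  simp only [Finset.prod_range_succ, Nat.factorial_succ]
  rw [div_mul_div_comm]
  push_cast
  congr 1 <;> ring

theorem dsT_shift (x : ℚ) (k : ℕ) (h : (k : ℚ) + 2 ≤ x) :
    dsT (x + 1) k = dsT x k * dsR x k := by
  induction k with
  | zero =>
    simp only [dsT_zero, dsR]
    push_cast at h ⊢
    have h1 : 1 - x + 0 ≠ 0 := by intro h'; linarith
    have h2 : x + 2 ≠ 0 := by intro h'; linarith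
    have h3 : x + 1 / 2 + 0 ≠ 0 := by intro h'; linarith
    rw [one_mul, eq_div_iff (by positivity)]
    ring
  | succ k ih =>
    push_cast at h
    rw [dsT_succ, dsT_succ, ih (by linarith), mul_assoc, mul_assoc]
    congr 1
    have hk : (0 : ℚ) ≤ k := k.cast_nonneg
    push_cast
    generalize (k : ℚ) = y at *
    obtain ⟨d, rfl⟩ : ∃ d, x = y + 3 + d := ⟨x - y - 3, by ring⟩
    have hd : 0 ≤ d := by linarith
    unfold dsS dsR
    rw [div_mul_div_comm, div_mul_div_comm, div_eq_div_iff]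
    · ring
    · refine mul_ne_zero (mul_ne_zero (mul_ne_zero ?_ ?_) ?_) (mul_ne_zero (mul_ne_zero (mul_ne_zero (mul_ne_zero ?_ ?_) ?_) ?_) ?_) <;> intro h' <;> linarith
    · refine mul_ne_zero (mul_ne_zero (mul_ne_zero (mul_ne_zero (mul_ne_zero ?_ ?_) ?_) ?_) ?_) (mul_ne_zero (mul_ne_zero ?_ ?_) ?_) <;> intro h' <;> linarith

theorem ds_partial (x : ℚ) (k : ℕ) (h : (k : ℚ) + 2 ≤ x) :
    ∑ j ∈ Finset.range k, (dsT (x + 1) j / (x + 1) - dsT x j / x) = dsC x k * dsT x k := by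
  induction k with
  | zero => simp [dsC]
  | succ k ih =>
    push_cast at h
    rw [Finset.sum_range_succ, ih (by linarith), dsT_shift x k (by linarith), dsT_succ]
    have hk : (0 : ℚ) ≤ k := k.cast_nonneg
    push_cast
    generalize dsT x k = t
    generalize (k : ℚ) = y at *
    have key : dsC x y + dsR x y / (x + 1) - 1 / x = dsC x (y + 1) * dsS x y := by
      unfold dsC dsR dsS
      have h1 : x ≠ 0 := by intro h'; linarith
      have h2 : x + 1 ≠ 0 := by intro h'; linarith
      have h3 : x + 2 ≠ 0 := by intro h'; linarith
      have h4 : 4 * y + 3 ≠ 0 := by intro h'; linarith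
      have h5 : y - x + 1 ≠ 0 := by intro h'; linarith
      have h6 : 1 - x + y ≠ 0 := by intro h'; linarith
      have h7 : x + 1 / 2 + y ≠ 0 := by intro h'; linarith
      have h8 : 4 * (y + 1) + 3 ≠ 0 := by intro h'; linarith
      have h9 : y + 1 - x + 1 ≠ 0 := by intro h'; linarith
      have h10 : 3 / 4 + y ≠ 0 := by intro h'; linarith
      have h11 : 2 + y ≠ 0 := by intro h'; linarith
      have h12 : 1 / 2 - x + y ≠ 0 := by intro h'; linarith
      have h13 : y + 1 ≠ 0 := by intro h'; linarith
      rw [div_div, div_add_div _ _ (by positivity) (by positivity),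
        div_sub_div _ _ (by positivity) h1,
        div_mul_div_comm, div_eq_div_iff (by positivity) (by positivity)]
      ring
    linear_combination t * key

theorem ds_last (x : ℚ) (k : ℕ) (h : x = (k : ℚ) + 2) :
    dsC x k + (dsR x k + dsR x k * dsS (x + 1) k) / (x + 1) - 1 / x = 0 := by
  have hk : (0 : ℚ) ≤ k := k.cast_nonneg
  generalize (k : ℚ) = y at *
  subst h
  unfold dsC dsR dsS
  have e1 : y - (y + 2) + 1 = -1 := by ring
  have e2 : 1 - (y + 2) + y = -1 := by ring
  have e3 : 1 / 2 - (y + 2 + 1) + y = -(5 / 2) := by ring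
  have e4 : y - 1 / 2 - (y + 2) = -(5 / 2) := by ring
  have e5 : y - (y + 2) - 1 / 2 = -(5 / 2) := by ring
  have e6 : 2 - (y + 2 + 1) + y = -1 := by ring
  rw [e1, e2, e3, e4, e5, e6]
  field_simp
  ring

theorem ds_main (m : ℕ) :
    ∑ k ∈ Finset.range (m + 1), dsT ((m : ℚ) + 2) k = ((m : ℚ) + 2) / 2 := by
  induction m with
  | zero => simp [dsT_zero]
  | succ m ih =>
    have hp := ds_partial ((m : ℚ) + 2) m le_rfl
    have hl := ds_last ((m : ℚ) + 2) m rfl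
    have hs := dsT_shift ((m : ℚ) + 2) m le_rfl
    have e : ((m + 1 : ℕ) : ℚ) + 2 = (m : ℚ) + 2 + 1 := by push_cast; ring
    rw [e, Finset.sum_range_succ, Finset.sum_range_succ, dsT_succ, hs]
    rw [Finset.sum_range_succ] at ih
    rw [Finset.sum_sub_distrib, ← Finset.sum_div, ← Finset.sum_div] at hp
    have h1 : (m : ℚ) + 2 ≠ 0 := by positivity
    have h2 : (m : ℚ) + 2 + 1 ≠ 0 := by positivity
    generalize (∑ j ∈ Finset.range m, dsT ((m : ℚ) + 2 + 1) j) = A at *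
    generalize (∑ j ∈ Finset.range m, dsT ((m : ℚ) + 2) j) = B at *
    generalize dsT ((m : ℚ) + 2) m = t at *
    generalize dsR ((m : ℚ) + 2) m = r at *
    generalize dsS ((m : ℚ) + 2 + 1) m = s at *
    generalize dsC ((m : ℚ) + 2) m = c at *
    generalize (m : ℚ) + 2 = x at *
    have ih' : (B + t) / x = 1 / 2 := by rw [ih]; field_simp
    have : (A + t * r + t * r * s) / (x + 1) = 1 / 2 := by
      linear_combination hp + ih' + t * hl
    rw [div_eq_iff h2] at this
    rw [this]; ring

/-- For every `n ≥ 2`, the terminating well-poised hypergeometric sum satisfies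
`Σ_{k=0}^{n-2} [(3/2)_k (7/4)_k (1/2)_k (2-n)_k (2+n)_k] /
  [(3/4)_k (2)_k (n+1/2)_k (1/2-n)_k k!] = n/2`. -/
theorem dougall_sum (n : ℕ) (hn : 2 ≤ n) :
    ∑ k ∈ Finset.range (n - 1),
        (poch (3 / 2) k * poch (7 / 4) k * poch (1 / 2) k *
            poch (2 - (n : ℚ)) k * poch (2 + (n : ℚ)) k) /
          (poch (3 / 4) k * poch 2 k * poch ((n : ℚ) + 1 / 2) k *
            poch (1 / 2 - (n : ℚ)) k * (Nat.factorial k : ℚ))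
      = (n : ℚ) / 2 := by
  obtain ⟨m, rfl⟩ : ∃ m, n = m + 2 := ⟨n - 2, by omega⟩
  have h := ds_main m
  have e : ((m + 2 : ℕ) : ℚ) = (m : ℚ) + 2 := by push_cast; ring
  rw [e]
  exact h
end

section
/- For every integer n ≥ 3 and every k with 1 ≤ k ≤ n−2, the element w_k ∈ B_n is vexillary for type B; that is, w_k avoids each of the nine signed patterns 2 1; −3 2 −1; 2 −3 4 −1; −2 −3 4 −1; 3 −4 −1 −2; −3 −4 1 −2; −3 −4 −1 −2; −4 1 −2 3; −4 −1 −2 3. -/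
/-- For every `n ≥ 3` and `1 ≤ k ≤ n - 2`, the element `w_k ∈ Bₙ` is vexillary for
type `B`: it avoids each of the nine signed patterns. -/
theorem wk_vexillary (n k : ℕ) (hn : 3 ≤ n) (hk1 : 1 ≤ k) (hk2 : k ≤ n - 2) :
    ∀ p ∈ [([2, 1] : List ℤ), [-3, 2, -1], [2, -3, 4, -1], [-2, -3, 4, -1],
        [3, -4, -1, -2], [-3, -4, 1, -2], [-3, -4, -1, -2], [-4, 1, -2, 3],
        [-4, -1, -2, 3]],
      ¬ ContainsPattern n (wkFun n k) p := by
  -- every value on `{1, …, n}` is negative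
  have hneg : ∀ i : ℤ, 1 ≤ i ∧ i ≤ n → wkFun n k i < 0 := by
    intro i hi
    unfold wkFun
    split_ifs <;> omega
  -- so a pattern with a positive entry cannot occur
  have key : ∀ p : List ℤ, (∃ r : Fin p.length, 0 < p.get r) →
      ¬ ContainsPattern n (wkFun n k) p := by
    rintro p ⟨r, hr⟩ ⟨j, -, hj, -, hs⟩
    have := (hs r).1 (hneg _ (hj r))
    omega
  -- ascents only occur within positions `k, k+1, k+2`
  have hasc : ∀ a b : ℤ, 1 ≤ a → a < b → b ≤ n → wkFun n k a < wkFun n k b →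
      (k : ℤ) ≤ a ∧ b ≤ k + 2 := by
    intro a b ha hab hb h
    unfold wkFun at h
    split_ifs at h <;> omega
  intro p hp
  simp only [List.mem_cons, List.not_mem_nil, or_false] at hp
  rcases hp with rfl | rfl | rfl | rfl | rfl | rfl | rfl | rfl | rfl
  · exact key _ ⟨⟨0, by decide⟩, by decide⟩
  · exact key _ ⟨⟨1, by decide⟩, by decide⟩
  · exact key _ ⟨⟨0, by decide⟩, by decide⟩
  · exact key _ ⟨⟨2, by decide⟩, by decide⟩
  · exact key _ ⟨⟨0, by decide⟩, by decide⟩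
  · exact key _ ⟨⟨2, by decide⟩, by decide⟩
  · rintro ⟨j, hm, hj, hw, -⟩
    let r0 : Fin ([-3, -4, -1, -2] : List ℤ).length := ⟨0, by decide⟩
    let r1 : Fin ([-3, -4, -1, -2] : List ℤ).length := ⟨1, by decide⟩
    let r2 : Fin ([-3, -4, -1, -2] : List ℤ).length := ⟨2, by decide⟩
    let r3 : Fin ([-3, -4, -1, -2] : List ℤ).length := ⟨3, by decide⟩
    have h01 : j r0 < j r1 := hm (by decide)
    have h12 : j r1 < j r2 := hm (by decide)
    have h23 : j r2 < j r3 := hm (by decide)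
    have hv : wkFun n k (j r0) < wkFun n k (j r3) := (hw r0 r3).2 (by decide)
    have := hasc _ _ (hj r0).1 (by omega) (hj r3).2 hv
    omega
  · exact key _ ⟨⟨1, by decide⟩, by decide⟩
  · exact key _ ⟨⟨3, by decide⟩, by decide⟩
end

section
/- For every integer n ≥ 2, the element w′ ∈ B_n is vexillary for type B; that is, w′ avoids each of the nine signed patterns 2 1; −3 2 −1; 2 −3 4 −1; −2 −3 4 −1; 3 −4 −1 −2; −3 −4 1 −2; −3 −4 −1 −2; −4 1 −2 3; −4 −1 −2 3. -/
/-- If two positions carry an increasing pair that starts with a negative entry, or a decreasing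
pair that ends with a nonnegative entry, the pattern is avoided by `w'`. -/
lemma wp_avoid (n : ℕ) (p : List ℤ) (r s : Fin p.length) (hrs : r < s)
    (h : (p.get r < p.get s ∧ p.get r < 0) ∨ (p.get s < p.get r ∧ ¬ p.get s < 0)) :
    ¬ ContainsPattern n (wpFun n) p := by
  rintro ⟨j, hj, hb, hlt, hneg⟩
  have h1 := hj hrs
  have h2 := hb r
  have h3 := hb s
  rw [← hlt, ← hlt, ← hneg, ← hneg] at h
  unfold wpFun at h
  split_ifs at h <;> omega

/-- For every `n ≥ 2`, the element `w' ∈ Bₙ` is vexillary for type `B`: it avoids each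
of the nine signed patterns. -/
theorem wp_vexillary (n : ℕ) (hn : 2 ≤ n) :
    ∀ p ∈ [([2, 1] : List ℤ), [-3, 2, -1], [2, -3, 4, -1], [-2, -3, 4, -1],
        [3, -4, -1, -2], [-3, -4, 1, -2], [-3, -4, -1, -2], [-4, 1, -2, 3],
        [-4, -1, -2, 3]],
      ¬ ContainsPattern n (wpFun n) p := by
  intro p hp
  simp only [List.mem_cons, List.not_mem_nil, or_false] at hp
  rcases hp with rfl | rfl | rfl | rfl | rfl | rfl | rfl | rfl | rfl
  · exact wp_avoid n _ ⟨0, by decide⟩ ⟨1, by decide⟩ (by decide) (by decide)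
  · exact wp_avoid n _ ⟨0, by decide⟩ ⟨1, by decide⟩ (by decide) (by decide)
  · exact wp_avoid n _ ⟨1, by decide⟩ ⟨2, by decide⟩ (by decide) (by decide)
  · exact wp_avoid n _ ⟨1, by decide⟩ ⟨2, by decide⟩ (by decide) (by decide)
  · exact wp_avoid n _ ⟨1, by decide⟩ ⟨2, by decide⟩ (by decide) (by decide)
  · exact wp_avoid n _ ⟨1, by decide⟩ ⟨2, by decide⟩ (by decide) (by decide)
  · exact wp_avoid n _ ⟨1, by decide⟩ ⟨2, by decide⟩ (by decide) (by decide)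
  · exact wp_avoid n _ ⟨0, by decide⟩ ⟨1, by decide⟩ (by decide) (by decide)
  · exact wp_avoid n _ ⟨0, by decide⟩ ⟨1, by decide⟩ (by decide) (by decide)
end
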